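/- arXiv:1808.04948 — 7 statements merged into one kernel-verified Lean document; each statement's English description precedes it below -/
import Mathlib

section
/- Fix K ∈ ℕ with K ≥ 1. Call a vertex v of a tree internal (with respect to K) if for every neighbour w of v, the component containing v of the forest obtained by deleting the edge vw has more than K vertices. Let R be the set of internal vertices of 𝒯_n. Then for every ε > 0, the probability that (1−ε)·h(K)·n ≤ |R| ≤ (1+ε)·h(K)·n tends to 1 as n → ∞, where h(K) := 1 − ∑_{k=1}^{K} k^{k−1} e^{−k}/k!. -/
open Filter Topology

/-- The probability that a uniformly random labelled tree on `n` vertices satisfies `p`. -/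
noncomputable def treeProb (n : ℕ) (p : SimpleGraph (Fin n) → Prop) : ℝ :=
  (Nat.card {G : SimpleGraph (Fin n) // G.IsTree ∧ p G} : ℝ) /
    (Nat.card {G : SimpleGraph (Fin n) // G.IsTree} : ℝ)

/-- `h(K) = 1 - ∑_{k=1}^K k^{k-1} e^{-k}/k!`. -/
noncomputable def hfun (K : ℕ) : ℝ :=
  1 - ∑ k ∈ Finset.Icc 1 K, (k : ℝ) ^ (k - 1) * Real.exp (-(k : ℝ)) / (Nat.factorial k)

/-- A vertex `v` is internal (w.r.t. `K`) if for every neighbour `w` of `v`, the component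
containing `v` of the forest obtained by deleting the edge `vw` has more than `K` vertices. -/
def InternalVtx {n : ℕ} (K : ℕ) (G : SimpleGraph (Fin n)) (v : Fin n) : Prop :=
  ∀ w : Fin n, G.Adj v w →
    K < Nat.card {u : Fin n // (G.deleteEdges {s(v, w)}).Reachable v u}

/-!
A vertex of a tree fails to be internal exactly when it is the root of a small branch: a component
with at most `K` vertices that is cut off by a single edge, whose endpoint in the component is the
root. On more than `2 * K` vertices a vertex is the root of at most one small branch, so it suffices
to show that the number `X` of small branches is concentrated around `(1 - h(K)) n`.

A tree with a branch `S` is a tree on `S`, a tree on the complement, and an edge between them.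
Hence, if `r n` is the number of rooted trees on `n` vertices, the expected number of branches with
`k` vertices is `n * C(n, k) * r k * r (n - k) / r n`. Every tree has two branches per edge, with
complementary vertex sets; this turns the previous formula into a recursion for `r`, and Abel's
binomial identity gives Cayley's formula `r n = n ^ (n - 1)`. The expectation then becomes `n / k`
times a binomial probability with mean `k`, and the Poisson limit theorem gives
`𝔼 X / n → 1 - h(K)`.

For the second moment, remove one small branch from the tree: the small branches disjoint from it
are small branches of the remaining tree, and only `O(n)` pairs of small branches are nested. Hence
`𝔼 (X / n) ^ 2` has the limit `(1 - h(K)) ^ 2`, and Chebyshev's inequality applies because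
`h(K) > h(K + 1) ≥ 0`.
-/

section SecondMoment

open Finset
open scoped BigOperators

lemma card_filter_lt_abs_sub_div_le {α : Type*} (s : Finset α) (f : α → ℝ) (c : ℝ) {δ : ℝ}
    (hδ : 0 < δ) :
    (#{a ∈ s | δ < |f a - c|} : ℝ) / #s ≤ (𝔼 a ∈ s, (f a - c) ^ 2) / δ ^ 2 := by
  rw [expect_eq_sum_div_card, div_right_comm]
  gcongr
  rw [le_div_iff₀ (by positivity), ← nsmul_eq_mul]
  calc #{a ∈ s | δ < |f a - c|} • δ ^ 2
      ≤ ∑ a ∈ s with δ < |f a - c|, (f a - c) ^ 2 := by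
        refine card_nsmul_le_sum _ _ _ fun a ha ↦ ?_
        rw [sq_le_sq, abs_of_pos hδ]
        exact (mem_filter.1 ha).2.le
    _ ≤ ∑ a ∈ s, (f a - c) ^ 2 :=
        sum_le_sum_of_subset_of_nonneg (filter_subset _ _) fun _ _ _ ↦ sq_nonneg _

variable {ι : Type*} {l : Filter ι} {α : ι → Type*} {s : ∀ i, Finset (α i)} {f : ∀ i, α i → ℝ}
  {b : ι → ℝ} {c δ : ℝ}

lemma tendsto_expect_sub_sq (hs : ∀ᶠ i in l, (s i).Nonempty)
    (hf : Tendsto (fun i ↦ 𝔼 a ∈ s i, f i a) l (𝓝 c))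
    (hf_sq : ∀ᶠ i in l, 𝔼 a ∈ s i, f i a ^ 2 ≤ b i) (hb : Tendsto b l (𝓝 (c ^ 2))) :
    Tendsto (fun i ↦ 𝔼 a ∈ s i, (f i a - c) ^ 2) l (𝓝 0) := by
  have hlim : Tendsto (fun i ↦ b i - 2 * c * (𝔼 a ∈ s i, f i a) + c ^ 2) l (𝓝 0) := by
    convert (hb.sub (hf.const_mul (2 * c))).add_const (c ^ 2) using 2
    ring
  refine squeeze_zero' (.of_forall fun i ↦ expect_nonneg fun _ _ ↦ sq_nonneg _) ?_ hlim
  filter_upwards [hs, hf_sq] with i hi hi_sq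
  calc 𝔼 a ∈ s i, (f i a - c) ^ 2
      = 𝔼 a ∈ s i, f i a ^ 2 - 2 * c * (𝔼 a ∈ s i, f i a) + c ^ 2 := by
        rw [mul_expect, ← expect_const hi (c ^ 2), ← expect_sub_distrib, ← expect_add_distrib]
        exact expect_congr rfl fun a _ ↦ by ring
    _ ≤ b i - 2 * c * (𝔼 a ∈ s i, f i a) + c ^ 2 := by gcongr

lemma tendsto_card_filter_abs_sub_le_div (hs : ∀ᶠ i in l, (s i).Nonempty)
    (hf : Tendsto (fun i ↦ 𝔼 a ∈ s i, (f i a - c) ^ 2) l (𝓝 0)) (hδ : 0 < δ) :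
    Tendsto (fun i ↦ (#{a ∈ s i | |f i a - c| ≤ δ} : ℝ) / #(s i)) l (𝓝 1) := by
  have hlim : Tendsto (fun i ↦ 1 - (𝔼 a ∈ s i, (f i a - c) ^ 2) / δ ^ 2) l (𝓝 1) := by
    simpa using (hf.div_const (δ ^ 2)).const_sub 1
  refine tendsto_of_tendsto_of_tendsto_of_le_of_le' hlim tendsto_const_nhds ?_
    (.of_forall fun i ↦ ?_)
  · filter_upwards [hs] with i hi
    have hsplit : (#{a ∈ s i | |f i a - c| ≤ δ} : ℝ) + #{a ∈ s i | δ < |f i a - c|} = #(s i) := by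
      simp_rw [← not_le]
      exact_mod_cast card_filter_add_card_filter_not _
    calc 1 - (𝔼 a ∈ s i, (f i a - c) ^ 2) / δ ^ 2
        ≤ 1 - (#{a ∈ s i | δ < |f i a - c|} : ℝ) / #(s i) := by
          exact sub_le_sub_left (card_filter_lt_abs_sub_div_le _ _ _ hδ) 1
      _ = (#{a ∈ s i | |f i a - c| ≤ δ} : ℝ) / #(s i) := by
          have : (#(s i) : ℝ) ≠ 0 := by exact_mod_cast hi.card_ne_zero
          rw [← hsplit] at this ⊢
          field_simp
          ring
  · exact div_le_one_of_le₀ (by exact_mod_cast card_filter_le _ _) (by positivity)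

end SecondMoment

section Abel

open Finset

variable {R : Type*} [CommRing R]

lemma sum_neg_one_pow_mul_choose_mul_pow (n : ℕ) :
    ∑ k ∈ range (n + 1), (-1) ^ (n - k) * ((n + 1).choose (k + 1) : R) * (k + 1) ^ n =
      0 ^ n := by
  have h := congrFun (fwdDiff_iter_pow_eq_zero_of_lt (R := R) n.lt_succ_self) 0
  rw [fwdDiff_iter_eq_sum_shift, sum_range_succ'] at h
  simpa [pow_succ, add_eq_zero_iff_eq_neg, ← neg_pow] using h

/-- This is the coefficient of `x` in Abel's binomial identity
`∑ k ≤ n, (n.choose k) * x * (x + k) ^ (k - 1) * (y - k) ^ (n - k) = (x + y) ^ n`. -/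
lemma abel_identity (n : ℕ) (y : R) :
    ∑ k ∈ range (n + 1), ((n + 1).choose (k + 1) : R) * (k + 1) ^ k * (y - (k + 1)) ^ (n - k) =
      (n + 1) * y ^ n := by
  have hcoeff : ∀ j ∈ range (n + 1), ∀ k ∈ range (n - j + 1),
      ((n + 1).choose (k + 1) : R) * (k + 1) ^ k *
          (y ^ j * (-(k + 1)) ^ (n - k - j) * (n - k).choose j) =
        (n + 1).choose j * y ^ j *
          ((-1) ^ (n - j - k) * ((n - j + 1).choose (k + 1) : R) * (k + 1) ^ (n - j)) := by
    intro j hj k hk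
    rw [mem_range] at hj hk
    obtain ⟨i, rfl⟩ : ∃ i, n = j + k + i := ⟨n - (j + k), by omega⟩
    have hchoose : ((j + k + i + 1).choose (k + 1) : R) * (j + i).choose j =
        (j + k + i + 1).choose j * (k + i + 1).choose (k + 1) := by
      have h := Nat.choose_mul (n := j + k + i + 1) (k := j + i) (s := j) (by omega)
      rw [Nat.choose_symm_of_eq_add (show j + k + i + 1 = k + 1 + (j + i) by ring),
        Nat.choose_symm_of_eq_add (show k + i + 1 = k + 1 + i by ring)]
      rw [show j + k + i + 1 - j = k + i + 1 by omega, show j + i - j = i by omega] at h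
      exact_mod_cast congrArg (Nat.cast (R := R)) h
    rw [show j + k + i - k - j = i by omega, show j + k + i - k = j + i by omega,
      show j + k + i - j = k + i by omega, show k + i - k = i by omega, neg_pow, pow_add]
    linear_combination ((k + 1) ^ k * y ^ j * ((-1) ^ i * (k + 1) ^ i)) * hchoose
  calc _ = ∑ k ∈ range (n + 1), ∑ j ∈ range (n - k + 1),
        ((n + 1).choose (k + 1) : R) * (k + 1) ^ k *
          (y ^ j * (-(k + 1)) ^ (n - k - j) * (n - k).choose j) := by
        simp_rw [sub_eq_add_neg, add_pow, mul_sum]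
    _ = ∑ j ∈ range (n + 1), ∑ k ∈ range (n - j + 1), (n + 1).choose j * y ^ j *
          ((-1) ^ (n - j - k) * ((n - j + 1).choose (k + 1) : R) * (k + 1) ^ (n - j)) := by
        rw [sum_comm' (t' := range (n + 1)) (s' := fun j ↦ range (n - j + 1))
          (by simp only [mem_range]; omega)]
        exact sum_congr rfl fun j hj ↦ sum_congr rfl (hcoeff j hj)
    _ = ∑ j ∈ range (n + 1), (n + 1).choose j * y ^ j * 0 ^ (n - j) := by
        simp_rw [← mul_sum, sum_neg_one_pow_mul_choose_mul_pow]
    _ = (n + 1) * y ^ n := by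
        rw [sum_range_succ, sum_eq_zero fun j hj ↦ ?_]
        · simp
        · rw [zero_pow (Nat.sub_ne_zero_of_lt (mem_range.1 hj)), mul_zero]

end Abel

/-! ### Branches -/

section Branch

variable {V : Type*} {G H : SimpleGraph V} {S S' : Set V} {v w v' w' : V}

lemma exists_adj_of_mem_of_notMem (hG : G.Preconnected) (hv : v ∈ S) (hw : w ∉ S) :
    ∃ a ∈ S, ∃ b ∉ S, G.Adj a b := by
  obtain ⟨p⟩ := hG v w
  obtain ⟨d, -, hd, hd'⟩ := p.exists_boundary_dart S hv hw
  exact ⟨d.fst, hd, d.snd, hd', d.adj⟩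

/-- `S` is a branch of `G` with root `v`, attached to the rest of `G` at `w`: the edge `vw` is the
only one that leaves `S`, and `v` is its endpoint in `S`. In a tree this says that `S` is the
component of `v` after deletion of the edge `vw`. -/
def IsBranch (G : SimpleGraph V) (S : Set V) (v w : V) : Prop :=
  v ∈ S ∧ w ∉ S ∧ ∀ a ∈ S, ∀ b ∉ S, (G.Adj a b ↔ a = v ∧ b = w)

namespace IsBranch

lemma adj (h : IsBranch G S v w) : G.Adj v w := (h.2.2 v h.1 w h.2.1).2 ⟨rfl, rfl⟩

lemma compl (h : IsBranch G S v w) : IsBranch G Sᶜ w v := by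
  refine ⟨h.2.1, not_not.2 h.1, fun a ha b hb ↦ ?_⟩
  rw [G.adj_comm, h.2.2 b (not_not.1 hb) a ha, and_comm]

lemma induce_connected (h : IsBranch G S v w) (hG : G.Preconnected) :
    (G.induce S).Connected := by
  rw [SimpleGraph.connected_iff_exists_forall_reachable]
  refine ⟨⟨v, h.1⟩, fun u ↦ ?_⟩
  by_contra hu
  -- The edge `vw` does not leave the set of vertices that `v` does not reach inside `S`.
  obtain ⟨_, ⟨a, ha, rfl⟩, b, hb, hab⟩ := exists_adj_of_mem_of_notMem hG
    (S := (↑) '' {u : S | ¬ (G.induce S).Reachable ⟨v, h.1⟩ u}) (Set.mem_image_of_mem _ hu)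
    (w := v) (by simp [h.1])
  by_cases hbS : b ∈ S
  · have hb' : (G.induce S).Reachable ⟨v, h.1⟩ ⟨b, hbS⟩ := by simpa [hbS] using hb
    exact ha (hb'.trans (SimpleGraph.Adj.reachable (u := ⟨b, hbS⟩) (v := a) hab.symm))
  · obtain rfl : a = ⟨v, h.1⟩ := Subtype.ext ((h.2.2 a a.2 b hbS).1 hab).1
    exact ha .rfl

lemma induce_isTree (h : IsBranch G S v w) (hG : G.IsTree) : (G.induce S).IsTree :=
  ⟨h.induce_connected hG.connected.preconnected, hG.isAcyclic.induce S⟩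

lemma anti (h : IsBranch G S v w) (hle : H ≤ G) (hH : H.Preconnected) : IsBranch H S v w := by
  refine ⟨h.1, h.2.1, fun a ha b hb ↦ ⟨fun hab ↦ (h.2.2 a ha b hb).1 (hle hab), ?_⟩⟩
  rintro ⟨rfl, rfl⟩
  obtain ⟨x, hx, y, hy, hxy⟩ := exists_adj_of_mem_of_notMem hH ha hb
  obtain ⟨rfl, rfl⟩ := (h.2.2 x hx y hy).1 (hle hxy)
  exact hxy

lemma graph_ext (hG : IsBranch G S v w) (hH : IsBranch H S v w)
    (hS : G.induce S = H.induce S) (hS' : G.induce Sᶜ = H.induce Sᶜ) : G = H := by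
  ext a b
  by_cases ha : a ∈ S <;> by_cases hb : b ∈ S
  · exact iff_of_eq congr(($hS).Adj ⟨a, ha⟩ ⟨b, hb⟩)
  · rw [hG.2.2 a ha b hb, hH.2.2 a ha b hb]
  · rw [G.adj_comm, H.adj_comm, hG.2.2 b hb a ha, hH.2.2 b hb a ha]
  · exact iff_of_eq congr(($hS').Adj ⟨a, ha⟩ ⟨b, hb⟩)

lemma connected (h : IsBranch G S v w) (hS : (G.induce S).Connected)
    (hS' : (G.induce Sᶜ).Connected) : G.Connected := by
  refine (SimpleGraph.connected_iff_exists_forall_reachable G).2 ⟨v, fun x ↦ ?_⟩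
  by_cases hx : x ∈ S
  · exact (hS.preconnected ⟨v, h.1⟩ ⟨x, hx⟩).map (SimpleGraph.Embedding.induce S).toHom
  · exact h.adj.reachable.trans <|
      (hS'.preconnected ⟨w, h.2.1⟩ ⟨x, hx⟩).map (SimpleGraph.Embedding.induce Sᶜ).toHom

/-- Trees are the minimal connected graphs, so only connectivity has to be traced through the edge
`vw`. -/
lemma isTree (h : IsBranch G S v w) (hS : (G.induce S).IsTree) (hS' : (G.induce Sᶜ).IsTree) :
    G.IsTree := by
  rw [SimpleGraph.isTree_iff_minimal_connected] at hS hS' ⊢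
  refine ⟨h.connected hS.prop hS'.prop, fun H hH hle ↦ ?_⟩
  have hHS := h.anti hle hH.preconnected
  exact (hHS.graph_ext h
    (hS.eq_of_le (hHS.induce_connected hH.preconnected) fun _ _ hab ↦ hle hab)
    (hS'.eq_of_le (hHS.compl.induce_connected hH.preconnected) fun _ _ hab ↦ hle hab)).ge

lemma exists_adj (h : IsBranch G S v w) (hG : G.Preconnected) {x y : V} (hx : x ∈ S)
    (hx' : x ∈ S') (hy : y ∈ S) (hy' : y ∉ S') : ∃ a ∈ S ∩ S', ∃ b ∈ S \ S', G.Adj a b := by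
  obtain ⟨a, ha, b, hb, hab⟩ := exists_adj_of_mem_of_notMem (h.induce_connected hG).preconnected
    (S := (↑) ⁻¹' S') (v := ⟨x, hx⟩) (w := ⟨y, hy⟩) hx' hy'
  exact ⟨a, ⟨a.2, ha⟩, b, ⟨b.2, hb⟩, hab⟩

lemma subset (h : IsBranch G S v w) (h' : IsBranch G S' v w) (hG : G.Preconnected) : S ⊆ S' := by
  intro u hu
  by_contra hu'
  obtain ⟨a, ha, b, hb, hab⟩ := h.exists_adj hG h.1 h'.1 hu hu'
  exact h.2.1 (((h'.2.2 a ha.2 b hb.2).1 hab).2 ▸ hb.1)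

lemma unique (h : IsBranch G S v w) (h' : IsBranch G S' v w) (hG : G.Preconnected) : S = S' :=
  (h.subset h' hG).antisymm (h'.subset h hG)

lemma of_adj (hG : G.IsAcyclic) (hvw : G.Adj v w) :
    IsBranch G {u | (G.deleteEdges {s(v, w)}).Reachable v u} v w := by
  have hbridge : ¬ (G.deleteEdges {s(v, w)}).Reachable v w :=
    SimpleGraph.isBridge_iff.1 (SimpleGraph.isAcyclic_iff_forall_adj_isBridge.1 hG hvw)
  refine ⟨.rfl, hbridge, fun a ha b hb ↦ ⟨fun hab ↦ ?_, ?_⟩⟩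
  · by_contra hne
    have hab' : ¬ (G.deleteEdges {s(v, w)}).Adj a b := fun h ↦ hb (ha.trans h.reachable)
    rw [SimpleGraph.deleteEdges_adj, Set.mem_singleton_iff, Sym2.eq_iff] at hab'
    obtain ⟨rfl, rfl⟩ : a = w ∧ b = v := by tauto
    exact hbridge ha
  · rintro ⟨rfl, rfl⟩
    exact hvw

/-- An edge that leaves `S ∪ S'` has to be both `vw` and `vw'`. -/
lemma eq_of_union_ne_univ (h : IsBranch G S v w) (h' : IsBranch G S' v w') (hG : G.Preconnected)
    (hne : S ∪ S' ≠ .univ) : w = w' ∧ S = S' := by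
  obtain ⟨z, hz⟩ := (Set.ne_univ_iff_exists_notMem _).1 hne
  obtain ⟨a, ha, b, hb, hab⟩ := exists_adj_of_mem_of_notMem hG (Or.inl h.1) hz
  rw [Set.mem_union, not_or] at hb
  obtain rfl : w = w' := by
    rcases ha with ha | ha
    · obtain ⟨rfl, rfl⟩ := (h.2.2 a ha b hb.1).1 hab
      exact ((h'.2.2 a h'.1 b hb.2).1 hab).2
    · obtain ⟨rfl, rfl⟩ := (h'.2.2 a ha b hb.2).1 hab
      exact ((h.2.2 a h.1 b hb.1).1 hab).2.symm
  exact ⟨rfl, h.unique h' hG⟩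

lemma mem_or_mem (h : IsBranch G S v w) (h' : IsBranch G S' v' w') (hG : G.Preconnected)
    (hd : ¬ Disjoint S S') : v ∈ S' ∨ v' ∈ S := by
  obtain ⟨x, hx, hx'⟩ := Set.not_disjoint_iff.1 hd
  by_contra! hc
  obtain ⟨a, ha, b, hb, hab⟩ := h.exists_adj hG hx hx' h.1 hc.1
  exact hc.2 (((h'.2.2 a ha.2 b hb.2).1 hab).1 ▸ ha.1)

/-- Otherwise both branches hang on the same edge, and nothing leaves `S ∪ S'`. -/
lemma notMem_of_disjoint (h : IsBranch G S v w) (h' : IsBranch G S' v' w') (hG : G.Preconnected)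
    (hd : Disjoint S S') (hne : S ∪ S' ≠ .univ) : w' ∉ S := by
  intro hw'
  obtain ⟨rfl, rfl⟩ := (h.2.2 w' hw' v' (hd.notMem_of_mem_right h'.1)).1 h'.adj.symm
  obtain ⟨z, hz⟩ := (Set.ne_univ_iff_exists_notMem _).1 hne
  obtain ⟨a, ha, b, hb, hab⟩ := exists_adj_of_mem_of_notMem hG (Or.inl h.1) hz
  rw [Set.mem_union, not_or] at hb
  rcases ha with ha | ha
  · exact hb.2 (((h.2.2 a ha b hb.1).1 hab).2 ▸ h'.1)
  · exact hb.1 (((h'.2.2 a ha b hb.2).1 hab).2 ▸ h.1)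

end IsBranch

/-- The graph on `V` obtained from a graph on `S` and a graph on `Sᶜ` by adding the edge `vw`. -/
def graft (S : Set V) (v w : V) (G₁ : SimpleGraph S) (G₂ : SimpleGraph ↥Sᶜ) : SimpleGraph V :=
  G₁.map (Function.Embedding.subtype _) ⊔ G₂.map (Function.Embedding.subtype _) ⊔
    SimpleGraph.edge v w

section Graft

variable {G₁ : SimpleGraph S} {G₂ : SimpleGraph ↥Sᶜ}

lemma graft_adj (hv : v ∈ S) (hw : w ∉ S) (a b : V) :
    (graft S v w G₁ G₂).Adj a b ↔ (∃ (ha : a ∈ S) (hb : b ∈ S), G₁.Adj ⟨a, ha⟩ ⟨b, hb⟩) ∨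
      (∃ (ha : a ∉ S) (hb : b ∉ S), G₂.Adj ⟨a, ha⟩ ⟨b, hb⟩) ∨ (a = v ∧ b = w) ∨
      (a = w ∧ b = v) := by
  have hvw : v ≠ w := ne_of_mem_of_not_mem hv hw
  simp only [graft, SimpleGraph.sup_adj, SimpleGraph.map_adj, SimpleGraph.edge_adj,
    Function.Embedding.subtype_apply, Subtype.exists, Set.mem_compl_iff]
  grind

lemma isBranch_graft (hv : v ∈ S) (hw : w ∉ S) : IsBranch (graft S v w G₁ G₂) S v w := by
  refine ⟨hv, hw, fun a ha b hb ↦ ?_⟩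
  rw [graft_adj hv hw]
  grind

lemma induce_graft (hv : v ∈ S) (hw : w ∉ S) : (graft S v w G₁ G₂).induce S = G₁ := by
  ext ⟨a, ha⟩ ⟨b, hb⟩
  simp only [SimpleGraph.comap_adj, Function.Embedding.subtype_apply, graft_adj hv hw]
  grind

lemma induce_compl_graft (hv : v ∈ S) (hw : w ∉ S) :
    (graft S v w G₁ G₂).induce Sᶜ = G₂ := by
  ext ⟨a, ha⟩ ⟨b, hb⟩
  simp only [SimpleGraph.comap_adj, Function.Embedding.subtype_apply, graft_adj hv hw]
  grind

end Graft

end Branch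

/-! ### Counting trees by their branches -/

section Counting

open Finset
open scoped BigOperators

variable {V : Type*} [Finite V] {G : SimpleGraph V}

/-- The finite set of trees with vertex set `V`. -/
noncomputable def trees (V : Type*) [Finite V] : Finset (SimpleGraph V) :=
  (Set.toFinite {G : SimpleGraph V | G.IsTree}).toFinset

/-- The number of labelled trees on `n` vertices. -/
noncomputable def treeCount (n : ℕ) : ℕ := #(trees (Fin n))

/-- The number of labelled trees on `n` vertices with a distinguished vertex, the root. -/
noncomputable def rootedTreeCount (n : ℕ) : ℕ := n * treeCount n

/-- The branches of `G`, as triples `(S, v, w)` with `v` the root of `S` and `w` the vertex at which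
`S` is attached. -/
noncomputable def branches (G : SimpleGraph V) : Finset (Finset V × V × V) :=
  (Set.toFinite {τ | IsBranch G τ.1 τ.2.1 τ.2.2}).toFinset

lemma mem_trees : G ∈ trees V ↔ G.IsTree := by simp [trees]

lemma mem_branches {τ : Finset V × V × V} :
    τ ∈ branches G ↔ IsBranch G τ.1 τ.2.1 τ.2.2 := by simp [branches]

lemma trees_nonempty [Nonempty V] : (trees V).Nonempty := by
  obtain ⟨T, -, hT⟩ := (SimpleGraph.connected_top (V := V)).exists_isTree_le
  exact ⟨T, mem_trees.2 hT⟩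

lemma card_trees : #(trees V) = treeCount (Nat.card V) := by
  refine card_equiv (Finite.equivFin V).simpleGraph fun G ↦ ?_
  rw [mem_trees, mem_trees]
  exact (SimpleGraph.Iso.comap (Finite.equivFin V).symm G).isTree_iff.symm

lemma rootedTreeCount_pos {n : ℕ} (hn : 0 < n) : 0 < rootedTreeCount n := by
  have : NeZero n := ⟨hn.ne'⟩
  exact Nat.mul_pos hn trees_nonempty.card_pos

lemma natCard_coe_compl (S : Finset V) : Nat.card ↥(S : Set V)ᶜ = Nat.card V - #S := by
  rw [Nat.card_coe_set_eq, Set.ncard_compl, Set.ncard_coe_finset]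

lemma trees_compl_nonempty {S : Finset V} (hS : #S < Nat.card V) :
    (trees ↥(S : Set V)ᶜ).Nonempty := by
  have : Nonempty ↥(S : Set V)ᶜ := by
    rw [← Finite.card_pos_iff, natCard_coe_compl]
    exact Nat.sub_pos_of_lt hS
  exact trees_nonempty

lemma sum_trees_with_branch [DecidableEq V] {M : Type*} [AddCommMonoid M] {S : Finset V} {v w : V}
    (hv : v ∈ S) (hw : w ∉ S) (f : SimpleGraph ↥(S : Set V)ᶜ → M) :
    ∑ G ∈ trees V with (S, v, w) ∈ branches G, f (G.induce (S : Set V)ᶜ) =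
      treeCount #S • ∑ H ∈ trees ↥(S : Set V)ᶜ, f H := by
  replace hv : v ∈ (S : Set V) := hv
  replace hw : w ∉ (S : Set V) := hw
  have hcard : treeCount #S = #(trees (S : Set V)) := by simp [card_trees]
  rw [hcard, ← sum_const, ← sum_product']
  refine sum_bij' (fun G _ ↦ (G.induce (S : Set V), G.induce (S : Set V)ᶜ))
    (fun T _ ↦ graft S v w T.1 T.2) (fun G hG ↦ ?_) (fun T hT ↦ ?_) (fun G hG ↦ ?_)
    (fun T _ ↦ Prod.ext (induce_graft hv hw) (induce_compl_graft hv hw)) fun _ _ ↦ rfl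
  · rw [mem_filter, mem_trees, mem_branches] at hG
    rw [mem_product, mem_trees, mem_trees]
    exact ⟨hG.2.induce_isTree hG.1, hG.2.compl.induce_isTree hG.1⟩
  · rw [mem_product, mem_trees, mem_trees] at hT
    rw [mem_filter, mem_trees, mem_branches]
    exact ⟨(isBranch_graft hv hw).isTree ((induce_graft hv hw).symm ▸ hT.1)
      ((induce_compl_graft hv hw).symm ▸ hT.2), isBranch_graft hv hw⟩
  · rw [mem_filter, mem_branches] at hG
    exact (isBranch_graft hv hw).graph_ext hG.2 (induce_graft hv hw) (induce_compl_graft hv hw)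

lemma sum_trees_sum_branches [Fintype V] {M : Type*} [AddCommMonoid M]
    (F : ∀ S : Finset V, SimpleGraph ↥(S : Set V)ᶜ → M) :
    ∑ G ∈ trees V, ∑ τ ∈ branches G, F τ.1 (G.induce (τ.1 : Set V)ᶜ) =
      ∑ S : Finset V, (rootedTreeCount #S * (Nat.card V - #S)) •
        ∑ H ∈ trees ↥(S : Set V)ᶜ, F S H := by
  classical
  calc _ = ∑ τ : Finset V × V × V with τ.2.1 ∈ τ.1 ∧ τ.2.2 ∈ τ.1ᶜ,
        ∑ G ∈ trees V with τ ∈ branches G, F τ.1 (G.induce (τ.1 : Set V)ᶜ) := by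
        refine sum_comm' fun G τ ↦ ?_
        have : τ ∈ branches G → τ.2.1 ∈ τ.1 ∧ τ.2.2 ∉ τ.1 :=
          fun h ↦ ⟨(mem_branches.1 h).1, (mem_branches.1 h).2.1⟩
        simp only [mem_filter, mem_univ, true_and, mem_compl]
        tauto
    _ = ∑ τ : Finset V × V × V with τ.2.1 ∈ τ.1 ∧ τ.2.2 ∈ τ.1ᶜ,
        treeCount #τ.1 • ∑ H ∈ trees ↥(τ.1 : Set V)ᶜ, F τ.1 H := by
        refine sum_congr rfl fun τ hτ ↦ ?_
        simp only [mem_filter, mem_compl] at hτ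
        exact sum_trees_with_branch hτ.2.1 hτ.2.2 (F τ.1)
    _ = ∑ S : Finset V, ∑ _q ∈ S ×ˢ Sᶜ, treeCount #S • ∑ H ∈ trees ↥(S : Set V)ᶜ, F S H :=
        sum_finset_product _ _ _ (by simp)
    _ = _ := by
        refine sum_congr rfl fun S _ ↦ ?_
        rw [sum_const, card_product, card_compl, ← mul_smul, Nat.card_eq_fintype_card,
          rootedTreeCount]
        congr 1
        ring

/-- The expected number of branches with `k` vertices in a random tree on `n` vertices, divided by
`n`. The formula counts the sets of `k` vertices and the rooted trees on each of the two parts. -/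
noncomputable def branchDensity (n k : ℕ) : ℝ :=
  n.choose k * rootedTreeCount k * rootedTreeCount (n - k) / rootedTreeCount n

lemma branchDensity_zero_right (n : ℕ) : branchDensity n 0 = 0 := by
  simp [branchDensity, rootedTreeCount]

lemma branchDensity_self (n : ℕ) : branchDensity n n = 0 := by
  simp [branchDensity, rootedTreeCount]

lemma expect_sum_branches [Nonempty V] (F : ∀ S : Finset V, SimpleGraph ↥(S : Set V)ᶜ → ℝ)
    (g : ℕ → ℝ)
    (hg : ∀ S : Finset V, #S < Nat.card V → 𝔼 H ∈ trees ↥(S : Set V)ᶜ, F S H = g #S) :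
    𝔼 G ∈ trees V, ∑ τ ∈ branches G, F τ.1 (G.induce (τ.1 : Set V)ᶜ) =
      Nat.card V * ∑ k ∈ range (Nat.card V), branchDensity (Nat.card V) k * g k := by
  have := Fintype.ofFinite V
  set n := Nat.card V with hn
  have hn0 : (n : ℝ) ≠ 0 := by simp [hn]
  have hsum : ∀ S : Finset V, (rootedTreeCount #S * (n - #S)) •
      ∑ H ∈ trees ↥(S : Set V)ᶜ, F S H =
        rootedTreeCount #S * rootedTreeCount (n - #S) * g #S := by
    intro S
    obtain hS | hS := (card_le_univ S).lt_or_eq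
    · rw [← Nat.card_eq_fintype_card] at hS
      rw [← card_smul_expect, hg S hS, card_trees, natCard_coe_compl, ← hn]
      simp only [rootedTreeCount, nsmul_eq_mul]
      push_cast
      ring
    · rw [← Nat.card_eq_fintype_card, ← hn] at hS
      simp [hS, rootedTreeCount]
  calc _ = (∑ S : Finset V, rootedTreeCount #S * rootedTreeCount (n - #S) * g #S) /
        treeCount n := by
        rw [expect_eq_sum_div_card, sum_trees_sum_branches, sum_congr rfl fun S _ ↦ hsum S,
          card_trees]
    _ = (∑ k ∈ range (n + 1), n.choose k * (rootedTreeCount k * rootedTreeCount (n - k) * g k)) /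
        treeCount n := by
        rw [← powerset_univ, sum_powerset_apply_card
          (fun k ↦ (rootedTreeCount k * rootedTreeCount (n - k) * g k : ℝ)), card_univ,
          ← Nat.card_eq_fintype_card]
        simp_rw [nsmul_eq_mul, hn]
    _ = n * ∑ k ∈ range (n + 1), branchDensity n k * g k := by
        rw [mul_sum, sum_div]
        refine sum_congr rfl fun k _ ↦ ?_
        simp only [branchDensity, rootedTreeCount]
        push_cast
        field_simp
    _ = n * ∑ k ∈ range n, branchDensity n k * g k := by
        rw [sum_range_succ, branchDensity_self, zero_mul, add_zero]

lemma card_branches (hG : G.IsTree) : #(branches G) = 2 * (Nat.card V - 1) := by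
  classical
  have := Fintype.ofFinite V
  calc #(branches G) = #(univ : Finset G.Dart) := by
        refine card_bij (fun τ hτ ↦ ⟨τ.2, (mem_branches.1 hτ).adj⟩) (fun _ _ ↦ mem_univ _) ?_ ?_
        · rintro ⟨S, v, w⟩ hS ⟨S', v', w'⟩ hS' heq
          obtain ⟨rfl, rfl⟩ : v = v' ∧ w = w' := by simpa using heq
          rw [mem_branches] at hS hS'
          exact Prod.ext (coe_injective (hS.unique hS' hG.connected.preconnected)) rfl
        · rintro ⟨⟨v, w⟩, hvw⟩ -
          refine ⟨({u | (G.deleteEdges {s(v, w)}).Reachable v u}.toFinset, v, w), ?_, rfl⟩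
          rw [mem_branches, Set.coe_toFinset]
          exact .of_adj hG.isAcyclic hvw
    _ = 2 * (Nat.card V - 1) := by
        rw [card_univ, G.dart_card_eq_twice_card_edges, Nat.card_eq_fintype_card,
          ← hG.card_edgeFinset, Nat.add_sub_cancel]

lemma sum_branches_card_compl (hG : G.IsTree) :
    ∑ τ ∈ branches G, (Nat.card V - #τ.1) = Nat.card V * (Nat.card V - 1) := by
  classical
  have := Fintype.ofFinite V
  have hswap : ∑ τ ∈ branches G, (Nat.card V - #τ.1) = ∑ τ ∈ branches G, #τ.1 := by
    refine sum_nbij' (fun τ ↦ (τ.1ᶜ, τ.2.2, τ.2.1)) (fun τ ↦ (τ.1ᶜ, τ.2.2, τ.2.1))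
      (fun τ hτ ↦ ?_) (fun τ hτ ↦ ?_) (by simp) (by simp) (by simp [card_compl])
    all_goals
      rw [mem_branches, coe_compl]
      exact (mem_branches.1 hτ).compl
  have hadd : ∑ τ ∈ branches G, (Nat.card V - #τ.1) + ∑ τ ∈ branches G, #τ.1 =
      #(branches G) * Nat.card V := by
    rw [← sum_add_distrib, ← smul_eq_mul, ← sum_const]
    refine sum_congr rfl fun τ _ ↦ Nat.sub_add_cancel ?_
    rw [Nat.card_eq_fintype_card]
    exact card_le_univ _
  rw [← hswap, card_branches hG] at hadd
  linarith

lemma sum_branchDensity_mul_sub {n : ℕ} (hn : 0 < n) :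
    ∑ k ∈ range n, branchDensity n k * ((n - k : ℕ) : ℝ) = (n - 1 : ℕ) := by
  have : NeZero n := ⟨hn.ne'⟩
  have h := expect_sum_branches (V := Fin n) (fun S _ ↦ ((n - #S : ℕ) : ℝ))
    (fun k ↦ ((n - k : ℕ) : ℝ)) fun S hS ↦ expect_const (trees_compl_nonempty hS) _
  have hconst : ∀ G ∈ trees (Fin n), ∑ τ ∈ branches G, ((n - #τ.1 : ℕ) : ℝ) =
      n * (n - 1 : ℕ) := fun G hG ↦ by
    exact_mod_cast Nat.card_fin n ▸ sum_branches_card_compl (mem_trees.1 hG)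
  rw [expect_congr rfl hconst, expect_const trees_nonempty, Nat.card_fin] at h
  exact (mul_left_cancel₀ (by exact_mod_cast hn.ne') h).symm

end Counting

section Cayley

open Finset
open scoped BigOperators

/-- Cayley's formula, in its form for rooted trees. The recursion given by `expect_sum_branches` for
the number of vertices outside of a branch is solved by Abel's identity. -/
theorem rootedTreeCount_succ (n : ℕ) : rootedTreeCount (n + 1) = (n + 1) ^ n := by
  induction n using Nat.strong_induction_on with
  | _ n ih =>
  obtain rfl | hn := n.eq_zero_or_pos
  · have : treeCount 1 = 1 := (card_le_one_of_subsingleton _).antisymm trees_nonempty.card_pos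
    simp [rootedTreeCount, this]
  have hr : (rootedTreeCount (n + 1) : ℝ) ≠ 0 := by
    exact_mod_cast (rootedTreeCount_pos n.succ_pos).ne'
  have hrec : (n : ℝ) = ∑ k ∈ range (n + 1), branchDensity (n + 1) k * ((n + 1 - k : ℕ) : ℝ) := by
    simpa using (sum_branchDensity_mul_sub n.succ_pos).symm
  have hterm : ∀ k ∈ range n, branchDensity (n + 1) (k + 1) * ((n + 1 - (k + 1) : ℕ) : ℝ) =
      (n + 1).choose (k + 1) * (k + 1) ^ k * ((n + 1 : ℝ) - (k + 1)) ^ (n - k) /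
        rootedTreeCount (n + 1) := by
    intro k hk
    obtain ⟨i, rfl⟩ := Nat.exists_eq_add_of_lt (mem_range.1 hk)
    rw [branchDensity, show k + i + 1 + 1 - (k + 1) = i + 1 by omega,
      show k + i + 1 - k = i + 1 by omega, ih k (by omega), ih i (by omega)]
    push_cast
    ring
  have habel := abel_identity n (n + 1 : ℝ)
  rw [sum_range_succ, Nat.choose_self, Nat.sub_self] at habel
  rw [sum_range_succ', branchDensity_zero_right, zero_mul, add_zero, sum_congr rfl hterm,
    ← sum_div, eq_div_iff hr] at hrec
  have : (n : ℝ) * rootedTreeCount (n + 1) = n * (n + 1) ^ n := by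
    linear_combination hrec + habel
  exact_mod_cast mul_left_cancel₀ (by positivity) this

end Cayley

/-! ### Small branches -/

section SmallBranches

open Finset
open scoped BigOperators

lemma coe_union_ne_univ {V : Type*} {S S' : Finset V} (h : #S + #S' < Nat.card V) :
    (S ∪ S' : Set V) ≠ Set.univ := by
  classical
  intro huniv
  have hcard := card_union_le S S'
  rw [← Set.ncard_coe_finset, coe_union, huniv, Set.ncard_univ] at hcard
  omega

variable {V : Type*} [Finite V] {G : SimpleGraph V} {K : ℕ}

/-- The branches of `G` with at most `K` vertices. -/
noncomputable def smallBranches (K : ℕ) (G : SimpleGraph V) : Finset (Finset V × V × V) :=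
  {τ ∈ branches G | #τ.1 ≤ K}

lemma mem_smallBranches {τ : Finset V × V × V} :
    τ ∈ smallBranches K G ↔ IsBranch G τ.1 τ.2.1 τ.2.2 ∧ #τ.1 ≤ K := by
  rw [smallBranches, mem_filter, mem_branches]

lemma injOn_root_smallBranches (hG : G.Preconnected) (hK : 2 * K < Nat.card V) :
    Set.InjOn (fun τ ↦ τ.2.1) (smallBranches K G : Set (Finset V × V × V)) := by
  rintro ⟨S, v, w⟩ hS ⟨S', _, w'⟩ hS' rfl
  rw [mem_coe, mem_smallBranches] at hS hS'
  obtain ⟨rfl, heq⟩ := hS.1.eq_of_union_ne_univ hS'.1 hG (coe_union_ne_univ (by omega))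
  exact Prod.ext (coe_injective heq) rfl

lemma card_smallBranches_le (hG : G.Preconnected) (hK : 2 * K < Nat.card V) :
    #(smallBranches K G) ≤ Nat.card V := by
  have := Fintype.ofFinite V
  rw [Nat.card_eq_fintype_card]
  exact card_le_card_of_injOn _ (fun _ _ ↦ mem_univ _) (injOn_root_smallBranches hG hK)

lemma card_filter_disjoint_smallBranches_le [DecidableEq V] (hG : G.Preconnected)
    (hK : 2 * K < Nat.card V) {τ : Finset V × V × V} (hτ : τ ∈ smallBranches K G) :
    #{σ ∈ smallBranches K G | Disjoint τ.1 σ.1} ≤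
      #(smallBranches K (G.induce (τ.1 : Set V)ᶜ)) := by
  refine card_le_card_of_surjOn
    (fun ρ ↦ (ρ.1.map (Function.Embedding.subtype _), ρ.2.1.1, ρ.2.2.1)) ?_
  rintro ⟨S, v, w⟩ hσ
  rw [mem_coe, mem_filter, mem_smallBranches] at hσ
  obtain ⟨⟨hS, hSK⟩, hd⟩ := hσ
  rw [mem_smallBranches] at hτ
  have hd' : Disjoint (τ.1 : Set V) S := disjoint_coe.2 hd
  have hv : v ∈ (τ.1 : Set V)ᶜ := hd'.notMem_of_mem_right hS.1
  have hw : w ∈ (τ.1 : Set V)ᶜ :=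
    hτ.1.notMem_of_disjoint hS hG hd' (coe_union_ne_univ (by omega))
  have hmap : (S.subtype (· ∈ (τ.1 : Set V)ᶜ)).map (Function.Embedding.subtype _) = S :=
    subtype_map_of_mem fun _ hx ↦ hd'.notMem_of_mem_right hx
  refine ⟨(S.subtype (· ∈ (τ.1 : Set V)ᶜ), ⟨v, hv⟩, ⟨w, hw⟩), ?_, Prod.ext hmap rfl⟩
  rw [mem_coe, mem_smallBranches, ← card_map (Function.Embedding.subtype _), hmap]
  refine ⟨⟨?_, ?_, fun a ha b hb ↦ ?_⟩, hSK⟩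
  · simpa using hS.1
  · simpa using hS.2.1
  · simp only [mem_coe, mem_subtype] at ha hb
    simpa [Subtype.ext_iff] using hS.2.2 a ha b hb

lemma sum_card_filter_root_mem_le [DecidableEq V] (hG : G.Preconnected)
    (hK : 2 * K < Nat.card V) :
    ∑ τ ∈ smallBranches K G, #{σ ∈ smallBranches K G | σ.2.1 ∈ τ.1} ≤ K * Nat.card V := by
  calc _ ≤ ∑ _τ ∈ smallBranches K G, K := by
        refine sum_le_sum fun τ hτ ↦ le_trans ?_ (mem_smallBranches.1 hτ).2
        exact card_le_card_of_injOn _ (fun σ hσ ↦ (mem_filter.1 hσ).2)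
          ((injOn_root_smallBranches hG hK).mono (coe_subset.2 (filter_subset _ _)))
    _ ≤ K * Nat.card V := by
        rw [sum_const, smul_eq_mul, mul_comm]
        exact Nat.mul_le_mul_left _ (card_smallBranches_le hG hK)

/-- Two branches are disjoint, or one of them contains the root of the other. -/
lemma sq_card_smallBranches_le (hG : G.Preconnected) (hK : 2 * K < Nat.card V) :
    #(smallBranches K G) ^ 2 ≤
      ∑ τ ∈ smallBranches K G, #(smallBranches K (G.induce (τ.1 : Set V)ᶜ)) +
        2 * K * Nat.card V := by
  classical
  set B := smallBranches K G
  have hcover : ∀ τ ∈ B, #B ≤ #{σ ∈ B | Disjoint τ.1 σ.1} + #{σ ∈ B | σ.2.1 ∈ τ.1} +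
      #{σ ∈ B | τ.2.1 ∈ σ.1} := by
    intro τ hτ
    refine (card_le_card fun σ hσ ↦ ?_).trans <|
      (card_union_le _ _).trans (add_le_add_left (card_union_le _ _) _)
    have := fun hd ↦ (mem_smallBranches.1 hτ).1.mem_or_mem (mem_smallBranches.1 hσ).1 hG
      (mt disjoint_coe.1 hd)
    simp only [mem_union, mem_filter, hσ, true_and]
    tauto
  have hcomm : ∑ τ ∈ B, #{σ ∈ B | τ.2.1 ∈ σ.1} = ∑ τ ∈ B, #{σ ∈ B | σ.2.1 ∈ τ.1} := by
    simp only [card_filter]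
    exact sum_comm
  have hnested := sum_card_filter_root_mem_le hG hK
  calc #B ^ 2 = ∑ _τ ∈ B, #B := by rw [sum_const, smul_eq_mul, sq]
    _ ≤ ∑ τ ∈ B, #{σ ∈ B | Disjoint τ.1 σ.1} + 2 * ∑ τ ∈ B, #{σ ∈ B | σ.2.1 ∈ τ.1} := by
        refine (sum_le_sum hcover).trans_eq ?_
        rw [sum_add_distrib, sum_add_distrib, hcomm, two_mul, add_assoc]
    _ ≤ ∑ τ ∈ B, #(smallBranches K (G.induce (τ.1 : Set V)ᶜ)) + 2 * (K * Nat.card V) := by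
        gcongr with τ hτ
        exact card_filter_disjoint_smallBranches_le hG hK hτ
    _ = _ := by rw [mul_assoc]

end SmallBranches

section Moments

open Finset
open scoped BigOperators

variable {V : Type*} [Finite V] {K : ℕ}

/-- The expected number of branches with at most `K` vertices in a random tree on `n` vertices,
divided by `n`. -/
noncomputable def smallBranchDensity (K n : ℕ) : ℝ := ∑ k ∈ Icc 1 K, branchDensity n k

lemma expect_sum_smallBranches (hK : K < Nat.card V)
    (F : ∀ S : Finset V, SimpleGraph ↥(S : Set V)ᶜ → ℝ) (g : ℕ → ℝ)
    (hg : ∀ S : Finset V, #S ≤ K → 𝔼 H ∈ trees ↥(S : Set V)ᶜ, F S H = g #S) :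
    𝔼 G ∈ trees V, ∑ τ ∈ smallBranches K G, F τ.1 (G.induce (τ.1 : Set V)ᶜ) =
      Nat.card V * ∑ k ∈ Icc 1 K, branchDensity (Nat.card V) k * g k := by
  have : Nonempty V := Finite.card_pos_iff.1 (by omega)
  have h := expect_sum_branches (fun S H ↦ if #S ≤ K then F S H else 0)
    (fun k ↦ if k ≤ K then g k else 0) fun S _ ↦ by
      split_ifs with hSK
      · exact hg S hSK
      · simp
  simp_rw [← sum_filter, mul_ite, mul_zero, ← sum_filter] at h
  refine h.trans ?_
  congr 1
  symm
  refine sum_subset (fun k hk ↦ ?_) fun k hk hk' ↦ ?_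
  · simp only [mem_Icc, mem_filter, mem_range] at hk ⊢
    omega
  · obtain rfl : k = 0 := by
      simp only [mem_Icc, mem_filter, mem_range] at hk hk'
      omega
    rw [branchDensity_zero_right, zero_mul]

lemma expect_card_smallBranches (hK : K < Nat.card V) :
    𝔼 G ∈ trees V, (#(smallBranches K G) : ℝ) =
      Nat.card V * smallBranchDensity K (Nat.card V) := by
  simpa [smallBranchDensity] using expect_sum_smallBranches hK (fun _ _ ↦ 1) (fun _ ↦ 1)
    fun S hS ↦ expect_const (trees_compl_nonempty (hS.trans_lt hK)) _

lemma expect_card_smallBranches_sq_le (hK : 2 * K < Nat.card V) :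
    𝔼 G ∈ trees V, (#(smallBranches K G) : ℝ) ^ 2 ≤
      Nat.card V * ∑ k ∈ Icc 1 K, branchDensity (Nat.card V) k *
        ((Nat.card V - k : ℕ) * smallBranchDensity K (Nat.card V - k)) +
      2 * K * Nat.card V := by
  have : Nonempty V := Finite.card_pos_iff.1 (by omega)
  rw [← expect_sum_smallBranches (by omega) (fun S H ↦ (#(smallBranches K H) : ℝ))
    (fun k ↦ (Nat.card V - k : ℕ) * smallBranchDensity K (Nat.card V - k)) fun S hS ↦ ?_]
  · rw [← expect_const (s := trees V) trees_nonempty (2 * K * Nat.card V : ℝ),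
      ← expect_add_distrib]
    refine expect_le_expect fun G hG ↦ ?_
    exact_mod_cast sq_card_smallBranches_le (mem_trees.1 hG).connected.preconnected hK
  · rw [expect_card_smallBranches (by rw [natCard_coe_compl]; omega), natCard_coe_compl]

lemma expect_smallBranches_div_sq_le {n : ℕ} (hK : 2 * K < n) :
    𝔼 G ∈ trees (Fin n), (#(smallBranches K G) / n : ℝ) ^ 2 ≤
      ∑ k ∈ Icc 1 K, branchDensity n k * ((1 - k / n) * smallBranchDensity K (n - k)) +
        2 * K / n := by
  have hn : (0 : ℝ) < n := by exact_mod_cast (by omega : 0 < n)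
  have h := expect_card_smallBranches_sq_le (V := Fin n) (K := K) (by simpa using hK)
  rw [Nat.card_fin] at h
  simp_rw [div_pow]
  rw [← expect_div, div_le_iff₀ (by positivity)]
  refine h.trans_eq ?_
  rw [add_mul, sum_mul, mul_sum]
  congr 1
  · refine sum_congr rfl fun k hk ↦ ?_
    rw [Nat.cast_sub (by rw [mem_Icc] at hk; omega)]
    field_simp
  · field_simp

lemma expect_smallBranches_div {n : ℕ} (hK : K < n) :
    𝔼 G ∈ trees (Fin n), (#(smallBranches K G) / n : ℝ) = smallBranchDensity K n := by
  have hn : (n : ℝ) ≠ 0 := by exact_mod_cast (by omega : n ≠ 0)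
  rw [← expect_div, expect_card_smallBranches (by simpa using hK), Nat.card_fin,
    mul_div_cancel_left₀ _ hn]

end Moments

/-! ### Asymptotics -/

section Asymptotics

open Finset
open scoped BigOperators

/-- By Cayley's formula a branch density is a binomial probability, up to a factor that tends to
`1 / k`. -/
lemma branchDensity_eq {n k : ℕ} (hk : 0 < k) (hn : k < n) :
    branchDensity n k =
      n.choose k * (k / n : ℝ) ^ k * (1 - k / n : ℝ) ^ (n - k) / (k * (1 - k / n)) := by
  obtain ⟨j, rfl⟩ := Nat.exists_eq_add_one_of_ne_zero hk.ne'
  obtain ⟨i, rfl⟩ := Nat.exists_eq_add_of_lt hn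
  have hsub : (1 - (j + 1 : ℕ) / (j + 1 + i + 1 : ℕ) : ℝ) = (i + 1) / (j + 1 + i + 1 : ℕ) := by
    field_simp
    push_cast
    ring
  rw [hsub, branchDensity, rootedTreeCount_succ, rootedTreeCount_succ,
    show j + 1 + i + 1 - (j + 1) = i + 1 by omega, rootedTreeCount_succ, div_pow, div_pow]
  push_cast
  field_simp
  ring

lemma tendsto_branchDensity {k : ℕ} (hk : 0 < k) :
    Tendsto (fun n ↦ branchDensity n k) atTop
      (𝓝 ((k : ℝ) ^ (k - 1) * Real.exp (-(k : ℝ)) / k.factorial)) := by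
  have hk0 : (k : ℝ) ≠ 0 := by exact_mod_cast hk.ne'
  have hmean : Tendsto (fun n : ℕ ↦ n * (k / n : ℝ)) atTop (𝓝 k) := by
    refine tendsto_const_nhds.congr' ?_
    filter_upwards [eventually_gt_atTop 0] with n hn
    field_simp
  have hfactor : Tendsto (fun n : ℕ ↦ k * (1 - k / n : ℝ)) atTop (𝓝 k) := by
    simpa using ((tendsto_const_div_atTop_nhds_zero_nat (k : ℝ)).const_sub 1).const_mul (k : ℝ)
  have hpoisson :=
    (ProbabilityTheory.tendsto_choose_mul_pow_of_tendsto_mul_atTop k hmean).div hfactor hk0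
  have hlim : Real.exp (-(k : ℝ)) * (k : ℝ) ^ k / k.factorial / k =
      (k : ℝ) ^ (k - 1) * Real.exp (-(k : ℝ)) / k.factorial := by
    rw [← pow_sub_one_mul hk.ne' (k : ℝ)]
    field_simp
  rw [hlim] at hpoisson
  refine hpoisson.congr' ?_
  filter_upwards [eventually_gt_atTop k] with n hn
  exact (branchDensity_eq hk hn).symm

lemma tendsto_smallBranchDensity (K : ℕ) :
    Tendsto (smallBranchDensity K) atTop (𝓝 (1 - hfun K)) := by
  rw [hfun, sub_sub_cancel]
  exact tendsto_finsetSum _ fun k hk ↦ tendsto_branchDensity (mem_Icc.1 hk).1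

lemma tendsto_sum_branchDensity_mul_smallBranchDensity (K : ℕ) :
    Tendsto (fun n : ℕ ↦ ∑ k ∈ Icc 1 K,
      branchDensity n k * ((1 - k / n) * smallBranchDensity K (n - k)) + 2 * K / n) atTop
      (𝓝 ((1 - hfun K) ^ 2)) := by
  have hsum : Tendsto (fun n : ℕ ↦ ∑ k ∈ Icc 1 K,
      branchDensity n k * ((1 - k / n) * smallBranchDensity K (n - k))) atTop
      (𝓝 (∑ k ∈ Icc 1 K, (k : ℝ) ^ (k - 1) * Real.exp (-(k : ℝ)) / k.factorial *
        ((1 - 0) * (1 - hfun K)))) :=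
    tendsto_finsetSum _ fun k hk ↦ (tendsto_branchDensity (mem_Icc.1 hk).1).mul <|
      ((tendsto_const_div_atTop_nhds_zero_nat _).const_sub 1).mul <|
        (tendsto_smallBranchDensity K).comp (tendsto_sub_atTop_nat k)
  convert hsum.add (tendsto_const_div_atTop_nhds_zero_nat (2 * K : ℝ)) using 2
  rw [← sum_mul, hfun]
  ring

lemma eventually_trees_nonempty : ∀ᶠ n : ℕ in atTop, (trees (Fin n)).Nonempty := by
  filter_upwards [eventually_ne_atTop 0] with n hn
  have : NeZero n := ⟨hn⟩
  exact trees_nonempty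

lemma tendsto_expect_smallBranches_div_sub_sq (K : ℕ) :
    Tendsto (fun n : ℕ ↦ 𝔼 G ∈ trees (Fin n), (#(smallBranches K G) / n - (1 - hfun K) : ℝ) ^ 2)
      atTop (𝓝 0) := by
  refine tendsto_expect_sub_sq eventually_trees_nonempty
    ((tendsto_smallBranchDensity K).congr' ?_) ?_
    (tendsto_sum_branchDensity_mul_smallBranchDensity K)
  all_goals filter_upwards [eventually_gt_atTop (2 * K)] with n hn
  · exact (expect_smallBranches_div (by omega)).symm
  · exact expect_smallBranches_div_sq_le hn

lemma hfun_nonneg (K : ℕ) : 0 ≤ hfun K := by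
  suffices 1 - hfun K ≤ 1 by linarith
  refine le_of_tendsto (tendsto_smallBranchDensity K) ?_
  filter_upwards [eventually_gt_atTop (2 * K)] with n hn
  have : NeZero n := ⟨by omega⟩
  rw [← expect_smallBranches_div (by omega)]
  refine expect_le trees_nonempty fun G hG ↦ div_le_one_of_le₀ ?_ n.cast_nonneg
  have hcard := card_smallBranches_le (mem_trees.1 hG).connected.preconnected (by simpa using hn)
  exact_mod_cast Nat.card_fin n ▸ hcard

lemma hfun_pos (K : ℕ) : 0 < hfun K := by
  have hterm : (0 : ℝ) < ((K + 1 : ℕ) : ℝ) ^ (K + 1 - 1) * Real.exp (-((K + 1 : ℕ) : ℝ)) /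
      (K + 1).factorial := by positivity
  have hsucc := hfun_nonneg (K + 1)
  rw [hfun, sum_Icc_succ_top (by omega), ← sub_sub, ← hfun] at hsucc
  linarith

end Asymptotics

/-! ### Internal vertices -/

section InternalVertices

open Finset

variable {n K : ℕ} {G : SimpleGraph (Fin n)}

lemma not_internalVtx_iff (hG : G.IsTree) (v : Fin n) :
    ¬ InternalVtx K G v ↔ ∃ τ ∈ smallBranches K G, τ.2.1 = v := by
  simp only [InternalVtx, not_forall, not_lt]
  constructor
  · rintro ⟨w, hvw, hcard⟩
    refine ⟨((Set.toFinite {u | (G.deleteEdges {s(v, w)}).Reachable v u}).toFinset, v, w), ?_, rfl⟩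
    rw [mem_smallBranches, Set.Finite.coe_toFinset, ← Set.ncard_eq_toFinset_card]
    exact ⟨.of_adj hG.isAcyclic hvw, hcard⟩
  · rintro ⟨⟨S, _, w⟩, hτ, rfl⟩
    obtain ⟨hS, hcard⟩ := mem_smallBranches.1 hτ
    refine ⟨w, hS.adj, ?_⟩
    rw [← Set.ncard_coe_finset,
      hS.unique (.of_adj hG.isAcyclic hS.adj) hG.connected.preconnected] at hcard
    exact hcard

lemma card_internalVtx (hK : 2 * K < n) (hG : G.IsTree) :
    (Nat.card {v : Fin n // InternalVtx K G v} : ℝ) = n - #(smallBranches K G) := by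
  classical
  have hroots : #{v : Fin n | ¬ InternalVtx K G v} = #(smallBranches K G) := by
    rw [← card_image_of_injOn
      (injOn_root_smallBranches hG.connected.preconnected (by simpa using hK))]
    congr 1
    ext v
    simp [not_internalVtx_iff hG]
  have hsplit := card_filter_add_card_filter_not (s := (univ : Finset (Fin n))) (InternalVtx K G)
  rw [hroots, card_univ, Fintype.card_fin] at hsplit
  rw [Nat.card_eq_fintype_card, Fintype.card_subtype, eq_sub_iff_add_eq]
  exact_mod_cast hsplit

lemma treeProb_eq (n : ℕ) (p : SimpleGraph (Fin n) → Prop) [DecidablePred p] :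
    treeProb n p = (#{G ∈ trees (Fin n) | p G} : ℝ) / #(trees (Fin n)) := by
  rw [treeProb, Nat.subtype_card (trees (Fin n)) fun _ ↦ mem_trees,
    Nat.subtype_card {G ∈ trees (Fin n) | p G} fun _ ↦ by rw [mem_filter, mem_trees]]

lemma internalVtx_count_bounds_iff (hK : 2 * K < n) (hG : G.IsTree) (ε : ℝ) :
    ((1 - ε) * hfun K * n ≤ (Nat.card {v : Fin n // InternalVtx K G v} : ℝ) ∧
      (Nat.card {v : Fin n // InternalVtx K G v} : ℝ) ≤ (1 + ε) * hfun K * n) ↔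
    |(#(smallBranches K G) / n - (1 - hfun K) : ℝ)| ≤ ε * hfun K := by
  have hn : (0 : ℝ) < n := by exact_mod_cast (by omega : 0 < n)
  have hX : (n - #(smallBranches K G) : ℝ) = (1 - #(smallBranches K G) / n) * n := by field_simp
  rw [card_internalVtx hK hG, hX, mul_le_mul_iff_left₀ hn, mul_le_mul_iff_left₀ hn, abs_sub_le_iff]
  constructor <;> rintro ⟨h, h'⟩ <;> constructor <;> linarith

end InternalVertices

/-- For fixed `K ≥ 1` and every `ε > 0`, a.a.s. the number `|R|` of internal vertices of
`𝒯_n` satisfies `(1-ε) h(K) n ≤ |R| ≤ (1+ε) h(K) n`. -/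
theorem aas_internal_count (K : ℕ) (hK : 1 ≤ K) :
    ∀ ε : ℝ, 0 < ε →
      Tendsto (fun n : ℕ =>
        treeProb n (fun G =>
          (1 - ε) * hfun K * n ≤ (Nat.card {v : Fin n // InternalVtx K G v} : ℝ) ∧
          (Nat.card {v : Fin n // InternalVtx K G v} : ℝ) ≤ (1 + ε) * hfun K * n))
        atTop (𝓝 1) := by
  classical
  intro ε hε
  refine (tendsto_card_filter_abs_sub_le_div eventually_trees_nonempty
    (tendsto_expect_smallBranches_div_sub_sq K) (mul_pos hε (hfun_pos K))).congr' ?_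
  filter_upwards [eventually_gt_atTop (2 * K)] with n hn
  rw [treeProb_eq]
  congr 3 with G
  simp only [Finset.mem_filter, and_congr_right_iff]
  intro hG
  exact (internalVtx_count_bounds_iff hn (mem_trees.1 hG) ε).symm
end

section
/- Let h(K) := 1 − ∑_{k=1}^{K} k^{k−1} e^{−k}/k!. Then h(K) = Θ(1/√K): there exist constants c₁, c₂ > 0 such that for all K ≥ 1, c₁/√K ≤ h(K) ≤ c₂/√K. -/
open Filter Finset Real Topology

section AbelIdentity

lemma choose_mul_choose_sub_comm (n k j : ℕ) :
    n.choose k * (n - k).choose j = n.choose j * (n - j).choose k := by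
  have hk := Nat.choose_mul (n := n) (Nat.le_add_right k j)
  have hj := Nat.choose_mul (n := n) (Nat.le_add_left j k)
  rw [Nat.add_sub_cancel_left] at hk
  rw [Nat.add_sub_cancel] at hj
  rw [← hk, ← hj, Nat.choose_symm_add]

variable {R : Type*} [CommRing R]

lemma sum_range_choose_succ_mul_pow_mul_neg_pow (n : ℕ) :
    ∑ k ∈ range (n + 1), ((n + 1).choose (k + 1) : R) * (k + 1) ^ k * (-(k + 1)) ^ (n - k)
      = if n = 0 then 1 else 0 := by
  rcases n with _ | n
  · simp
  -- The sum is the `(n + 2)`-nd finite difference of `x ↦ x ^ (n + 1)` at `0`.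
  have hdiff := congrFun (fwdDiff_iter_pow_eq_zero_of_lt (R := R) (Nat.lt_succ_self (n + 1))) 0
  rw [fwdDiff_iter_eq_sum_shift, sum_range_succ'] at hdiff
  rw [if_neg n.succ_ne_zero]
  refine Eq.trans ?_ hdiff
  rw [zero_smul, add_zero, zero_pow n.succ_ne_zero, smul_zero, add_zero]
  refine sum_congr rfl fun k hk => ?_
  rw [Nat.succ_eq_add_one, Nat.add_sub_add_right, neg_pow, zsmul_eq_mul, nsmul_one, zero_add,
    ← pow_mul_pow_sub _ (mem_range_succ_iff.1 hk)]
  push_cast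
  ring

/-- The derivative at `x = 0` of Abel's binomial identity
`∑ k ≤ m, m.choose k * x * (x + k) ^ (k - 1) * (z - k) ^ (m - k) = (x + z) ^ m`, for `m = n + 1`. -/
theorem sum_range_choose_succ_mul_pow_mul_sub_pow (z : R) (n : ℕ) :
    ∑ k ∈ range (n + 1), ((n + 1).choose (k + 1) : R) * (k + 1) ^ k * (z - (k + 1)) ^ (n - k)
      = (n + 1) * z ^ n := by
  calc
    _ = ∑ k ∈ range (n + 1), ∑ j ∈ range (n - k + 1), ((n + 1).choose (k + 1) : R) * (k + 1) ^ k *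
          (z ^ j * (-(k + 1)) ^ (n - k - j) * ((n - k).choose j : R)) := by
        simp only [sub_eq_add_neg, add_pow, mul_sum]
    _ = ∑ j ∈ range (n + 1), ∑ k ∈ range (n - j + 1), ((n + 1).choose (k + 1) : R) * (k + 1) ^ k *
          (z ^ j * (-(k + 1)) ^ (n - k - j) * ((n - k).choose j : R)) :=
        sum_comm' fun k j => by simp only [mem_range]; omega
    _ = ∑ j ∈ range (n + 1), ((n + 1).choose j : R) * z ^ j * if n - j = 0 then 1 else 0 := by
        refine sum_congr rfl fun j hj => ?_
        rw [← sum_range_choose_succ_mul_pow_mul_neg_pow (R := R) (n - j), mul_sum]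
        refine sum_congr rfl fun k _ => ?_
        have hchoose := congrArg (Nat.cast (R := R)) (choose_mul_choose_sub_comm (n + 1) (k + 1) j)
        rw [Nat.add_sub_add_right, Nat.sub_add_comm (mem_range_succ_iff.1 hj)] at hchoose
        push_cast at hchoose
        rw [Nat.sub_right_comm]
        linear_combination ((k : R) + 1) ^ k * z ^ j * (-(k + 1)) ^ (n - j - k) * hchoose
    _ = (n + 1) * z ^ n := by
        rw [sum_range_succ, sum_eq_zero fun j hj => ?_]
        · simp
        · rw [if_neg (Nat.sub_ne_zero_of_lt (mem_range.1 hj)), mul_zero]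

end AbelIdentity

section Renewal

/-- The survival function of a law `f` on the positive integers. For `f` of total mass `1` it is
the tail beyond `N`; as defined it makes sense before the total mass is known. -/
noncomputable def survival (f : ℕ → ℝ) (N : ℕ) : ℝ := 1 - ∑ k ∈ Icc 1 N, f k

/-- `u` is the renewal sequence of the interarrival law `f`, with the renewal equation written for
`n + 1` in place of `n ≥ 1` and summed over `k + 1` in place of `k ≥ 1`, so that `f 0` is
ignored. -/
structure IsRenewal (f u : ℕ → ℝ) : Prop where
  zero : u 0 = 1
  succ (n : ℕ) : u (n + 1) = ∑ k ∈ range (n + 1), f (k + 1) * u (n - k)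

variable {f u : ℕ → ℝ} {c : ℝ}

lemma survival_succ (f : ℕ → ℝ) (N : ℕ) : survival f (N + 1) = survival f N - f (N + 1) := by
  rw [survival, survival, sum_Icc_succ_top (Nat.le_add_left 1 N), sub_add_eq_sub_sub]

lemma survival_eq_survival_add_add_sum (f : ℕ → ℝ) (N m : ℕ) :
    survival f N = survival f (N + m) + ∑ i ∈ range m, f (N + i + 1) := by
  induction m with
  | zero => simp
  | succ m ih =>
    rw [ih, sum_range_succ, ← add_assoc N, survival_succ]
    ring

lemma survival_antitone (hf : ∀ k, 0 ≤ f k) : Antitone (survival f) :=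
  antitone_nat_of_succ_le fun N => by
    rw [survival_succ]
    exact sub_le_self _ (hf _)

lemma div_sqrt_le_survival (hc : 0 ≤ c) (hf : ∀ k : ℕ, 1 ≤ k → c / (k * √k) ≤ f k)
    (hs : ∀ N, 0 ≤ survival f N) (K : ℕ) : c / (2 * √2) / √K ≤ survival f K := by
  have hterm : ∀ i ∈ range K, c / (2 * K * √(2 * K)) ≤ f (K + i + 1) := fun i hi => by
    have hle : ((K + i + 1 : ℕ) : ℝ) ≤ 2 * K := by
      exact_mod_cast (by have := mem_range.1 hi; omega : K + i + 1 ≤ 2 * K)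
    refine le_trans ?_ (hf (K + i + 1) (Nat.le_add_left 1 _))
    gcongr
  calc c / (2 * √2) / √K = K * (c / (2 * K * √(2 * K))) := by
        rw [Real.sqrt_mul zero_le_two]
        rcases K.eq_zero_or_pos with rfl | hK
        · simp
        · field_simp
    _ ≤ ∑ i ∈ range K, f (K + i + 1) := by
        simpa using card_nsmul_le_sum _ _ _ hterm
    _ ≤ survival f K := by
        rw [survival_eq_survival_add_add_sum f K K]
        exact le_add_of_nonneg_left (hs _)

namespace IsRenewal

lemma nonneg (h : IsRenewal f u) (hf : ∀ k, 0 ≤ f k) (n : ℕ) : 0 ≤ u n := by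
  induction n using Nat.strong_induction_on with
  | _ n ih =>
    rcases n with _ | n
    · exact h.zero ▸ zero_le_one
    · rw [h.succ]
      exact sum_nonneg fun k _ => mul_nonneg (hf _) (ih _ (by omega))

/-- The decomposition according to the last renewal up to time `N`, which takes place at time
`N - k`. -/
lemma sum_survival_mul (h : IsRenewal f u) (N : ℕ) :
    ∑ k ∈ range (N + 1), survival f k * u (N - k) = 1 := by
  induction N with
  | zero => simp [survival, h.zero]
  | succ N ih =>
    rw [sum_range_succ']
    simp only [survival_succ, Nat.add_sub_add_right, sub_mul, sum_sub_distrib, ih, ← h.succ]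
    simp [survival]

lemma survival_mul_sum_le_one (h : IsRenewal f u) (hf : ∀ k, 0 ≤ f k) (N : ℕ) :
    survival f N * ∑ n ∈ range (N + 1), u n ≤ 1 := by
  rw [← h.sum_survival_mul N, ← sum_range_reflect u, mul_sum]
  refine sum_le_sum fun k hk => ?_
  exact mul_le_mul_of_nonneg_right (survival_antitone hf (mem_range_succ_iff.1 hk))
    (h.nonneg hf _)

lemma survival_le_div_sqrt (h : IsRenewal f u) (hf : ∀ k, 0 ≤ f k) (hc : 0 < c)
    (hu : ∀ n : ℕ, 1 ≤ n → c / √n ≤ u n) {N : ℕ} (hN : 1 ≤ N) :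
    survival f N ≤ c⁻¹ / √N := by
  have hsqrt : 0 < √(N : ℝ) := Real.sqrt_pos.2 (by exact_mod_cast hN)
  have hterm : ∀ n ∈ range N, c / √N ≤ u (n + 1) := fun n hn => by
    have hnN : n + 1 ≤ N := mem_range.1 hn
    refine le_trans ?_ (hu (n + 1) (Nat.le_add_left 1 n))
    gcongr
  have hsum : c * √N ≤ ∑ n ∈ range (N + 1), u n :=
    calc c * √N = N * (c / √N) := by
          rw [mul_div_left_comm, Real.div_sqrt]
      _ ≤ ∑ n ∈ range N, u (n + 1) := by
          simpa using card_nsmul_le_sum _ _ _ hterm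
      _ ≤ ∑ n ∈ range (N + 1), u n := by
          rw [sum_range_succ' u]
          exact le_add_of_nonneg_right (h.nonneg hf 0)
  calc survival f N ≤ 1 / ∑ n ∈ range (N + 1), u n := by
        rw [le_div_iff₀ ((mul_pos hc hsqrt).trans_le hsum)]
        exact h.survival_mul_sum_le_one hf N
    _ ≤ 1 / (c * √N) := one_div_le_one_div_of_le (mul_pos hc hsqrt) hsum
    _ = c⁻¹ / √N := by rw [← div_div, one_div]

lemma survival_nonneg (h : IsRenewal f u) (hf : ∀ k, 0 ≤ f k) (hu : Tendsto u atTop (𝓝 0))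
    (M : ℕ) : 0 ≤ survival f M := by
  by_contra! hM
  have hle (n : ℕ) : 1 ≤ ∑ k ∈ range M, survival f k * u (n + M - k) := by
    rw [← h.sum_survival_mul (n + M), add_right_comm n M 1, add_comm (n + 1) M, sum_range_add]
    refine add_le_of_nonpos_right (sum_nonpos fun k _ => ?_)
    exact mul_nonpos_of_nonpos_of_nonneg
      ((survival_antitone hf (Nat.le_add_right M k)).trans hM.le) (h.nonneg hf _)
  have hlim : Tendsto (fun n => ∑ k ∈ range M, survival f k * u (n + M - k)) atTop (𝓝 0) := by
    rw [← sum_const_zero (s := range M)]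
    refine tendsto_finsetSum _ fun k hk => ?_
    rw [← mul_zero (survival f k)]
    simp only [Nat.add_sub_assoc (mem_range.1 hk).le]
    exact (hu.comp (tendsto_add_atTop_nat (M - k))).const_mul _
  exact zero_lt_one.not_ge (ge_of_tendsto' hlim hle)

end IsRenewal

end Renewal

section Borel

/-- The mass function `k^{k-1} e^{-k} / k!`, `k ≥ 1`, of the Borel distribution with
parameter `1`. At `k = 0` the truncated exponent makes the value `1`, which is not a mass. -/
noncomputable def borelMass (k : ℕ) : ℝ := (k : ℝ) ^ (k - 1) * exp (-k) / k.factorial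

/-- The probability `n^n e^{-n} / n!` that a Poisson variable of mean `n` takes the value `n`; these
form the renewal sequence of `borelMass`. -/
noncomputable def poissonDiag (n : ℕ) : ℝ := (n : ℝ) ^ n * exp (-n) / n.factorial

lemma hfun_eq_survival_borelMass : hfun = survival borelMass := rfl

lemma borelMass_nonneg (k : ℕ) : 0 ≤ borelMass k := by unfold borelMass; positivity

lemma borelMass_eq_poissonDiag_div {k : ℕ} (hk : 1 ≤ k) : borelMass k = poissonDiag k / k := by
  have hk' : (k : ℝ) ≠ 0 := by positivity
  rw [borelMass, poissonDiag, ← pow_sub_one_mul (Nat.one_le_iff_ne_zero.1 hk)]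
  field_simp

lemma isRenewal_borelMass_poissonDiag : IsRenewal borelMass poissonDiag where
  zero := by simp [poissonDiag]
  succ n := by
    have hterm : ∀ k ∈ range (n + 1), borelMass (k + 1) * poissonDiag (n - k) =
        exp (-(n + 1)) / (n + 1).factorial *
          ((n + 1).choose (k + 1) * (k + 1) ^ k * ((n + 1 : ℝ) - (k + 1)) ^ (n - k)) := by
      intro k hk
      have hkn : k ≤ n := mem_range_succ_iff.1 hk
      have hexp : exp (-(n + 1)) = exp (-(k + 1)) * exp (-(n - k : ℝ)) := by
        rw [← Real.exp_add]; ring_nf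
      rw [Nat.cast_choose ℝ (show k + 1 ≤ n + 1 by omega), hexp, borelMass, poissonDiag,
        Nat.add_sub_cancel, Nat.add_sub_add_right, add_sub_add_right_eq_sub]
      push_cast [hkn]
      field_simp
    rw [sum_congr rfl hterm, ← mul_sum, sum_range_choose_succ_mul_pow_mul_sub_pow, poissonDiag]
    push_cast
    ring

lemma poissonDiag_eq_inv {n : ℕ} (hn : n ≠ 0) :
    poissonDiag n = (√(2 * n) * Stirling.stirlingSeq n)⁻¹ := by
  rw [poissonDiag, Stirling.stirlingSeq, div_pow, ← Real.exp_nat_mul, mul_one, Real.exp_neg]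
  field_simp

lemma exp_neg_one_div_sqrt_le_poissonDiag {n : ℕ} (hn : n ≠ 0) :
    exp (-1) / √n ≤ poissonDiag n := by
  obtain ⟨m, rfl⟩ := Nat.exists_eq_add_one_of_ne_zero hn
  have hpos : 0 < Stirling.stirlingSeq (m + 1) := Stirling.stirlingSeq'_pos m
  have hle : Stirling.stirlingSeq (m + 1) ≤ exp 1 / √2 :=
    Stirling.stirlingSeq_one ▸ Stirling.stirlingSeq'_antitone m.zero_le
  rw [poissonDiag_eq_inv hn, Real.exp_neg, div_eq_mul_inv, ← mul_inv]
  refine inv_anti₀ (by positivity) ?_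
  calc √(2 * (m + 1 : ℕ)) * Stirling.stirlingSeq (m + 1)
      ≤ √(2 * (m + 1 : ℕ)) * (exp 1 / √2) := by gcongr
    _ = exp 1 * √(m + 1 : ℕ) := by
      rw [Real.sqrt_mul zero_le_two]
      field_simp

lemma tendsto_poissonDiag : Tendsto poissonDiag atTop (𝓝 0) := by
  have hsqrt : Tendsto (fun n : ℕ => √(2 * n)) atTop atTop :=
    Real.tendsto_sqrt_atTop.comp (tendsto_natCast_atTop_atTop.const_mul_atTop zero_lt_two)
  refine (hsqrt.atTop_mul_pos (Real.sqrt_pos.2 Real.pi_pos)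
    Stirling.tendsto_stirlingSeq_sqrt_pi).inv_tendsto_atTop.congr' ?_
  filter_upwards [eventually_ne_atTop 0] with n hn
  exact (poissonDiag_eq_inv hn).symm

lemma exp_neg_one_div_mul_sqrt_le_borelMass {k : ℕ} (hk : 1 ≤ k) :
    exp (-1) / (k * √k) ≤ borelMass k := by
  rw [borelMass_eq_poissonDiag_div hk, mul_comm, ← div_div]
  gcongr
  exact exp_neg_one_div_sqrt_le_poissonDiag (Nat.one_le_iff_ne_zero.1 hk)

end Borel

/-- `h(K) = Θ(1/√K)`: there are constants `c₁, c₂ > 0` with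
`c₁/√K ≤ h(K) ≤ c₂/√K` for all `K ≥ 1`. -/
theorem hfun_theta_inv_sqrt :
    ∃ c₁ c₂ : ℝ, 0 < c₁ ∧ 0 < c₂ ∧ ∀ K : ℕ, 1 ≤ K →
      c₁ / Real.sqrt K ≤ hfun K ∧ hfun K ≤ c₂ / Real.sqrt K := by
  have hrenewal := isRenewal_borelMass_poissonDiag
  have hnonneg := hrenewal.survival_nonneg borelMass_nonneg tendsto_poissonDiag
  rw [hfun_eq_survival_borelMass]
  refine ⟨exp (-1) / (2 * √2), (exp (-1))⁻¹, by positivity, by positivity, fun K hK => ⟨?_, ?_⟩⟩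
  · exact div_sqrt_le_survival (exp_pos _).le
      (fun _ hk => exp_neg_one_div_mul_sqrt_le_borelMass hk) hnonneg K
  · exact hrenewal.survival_le_div_sqrt borelMass_nonneg (exp_pos _)
      (fun _ hn => exp_neg_one_div_sqrt_le_poissonDiag (Nat.one_le_iff_ne_zero.1 hn)) hK
end

section
/- The series ∑_{k=1}^{∞} k^{k−1} e^{−k}/k! converges and its sum equals 1; equivalently, ∑_{k=1}^{∞} (k/e)^k/(k·k!) = 1. -/
/-!
With `T z = ∑_{k ≥ 1} k ^ (k - 1) z ^ k / k!` the tree function, the point is that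
`T (x e⁻ˣ) = x` for `0 ≤ x ≤ 1`, or `∑_k (k + 1) ^ k / (k + 1)! (x e⁻ˣ) ^ k = eˣ` after division
by `x e⁻ˣ`.

For small `x`, expand the exponentials in `∑_k (k + 1) ^ k / (k + 1)! x ^ k e^{-(k + 1) x}` and
collect powers of `x`. The coefficient of `x ^ n` is, up to a factor `(n + 1)!`, the `(n + 1)`-th
finite difference of `t ↦ t ^ n` at `0` without its `t = 0` term; since that difference vanishes,
only the constant term `1` survives.

As `(k + 1) ^ k / (k + 1)! ≤ e ^ (k + 1)`, the power series has radius of convergence at least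
`e⁻¹`, and `x e⁻ˣ < e⁻¹` for `x ≠ 1`, so the identity extends to `[0, 1)` by analytic continuation.
Its terms are nonnegative and increase with `x`, hence monotone convergence gives the case `x = 1`.
-/

open Filter Topology Finset
open scoped Nat

theorem hasSum_of_tendsto_of_nonneg_of_le {α ι : Type*} {l : Filter α} [l.NeBot]
    {f : α → ι → ℝ} {g : ι → ℝ} {F : α → ℝ} {a : ℝ}
    (hf : ∀ᶠ x in l, HasSum (f x) (F x)) (hf_nonneg : ∀ᶠ x in l, ∀ i, 0 ≤ f x i)
    (hf_le : ∀ᶠ x in l, ∀ i, f x i ≤ g i) (hfg : ∀ i, Tendsto (f · i) l (𝓝 (g i)))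
    (hF : Tendsto F l (𝓝 a)) : HasSum g a := by
  have hg_nonneg : 0 ≤ g := fun i ↦
    ge_of_tendsto (hfg i) (hf_nonneg.mono fun _ h ↦ h i)
  have hsum_le (s : Finset ι) : ∑ i ∈ s, g i ≤ a := by
    refine le_of_tendsto_of_tendsto (tendsto_finsetSum s fun i _ ↦ hfg i) hF ?_
    filter_upwards [hf, hf_nonneg] with x hx hx_nonneg
    exact sum_le_hasSum s (fun i _ ↦ hx_nonneg i) hx
  have hg : Summable g := summable_of_sum_le hg_nonneg hsum_le
  have htsum : Tendsto (fun x ↦ ∑' i, f x i) l (𝓝 (∑' i, g i)) := by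
    refine tendsto_tsum_of_dominated_convergence hg hfg ?_
    filter_upwards [hf_nonneg, hf_le] with x hx_nonneg hx_le i
    rw [Real.norm_of_nonneg (hx_nonneg i)]
    exact hx_le i
  have hF' : Tendsto F l (𝓝 (∑' i, g i)) := htsum.congr' (hf.mono fun _ h ↦ h.tsum_eq)
  exact tendsto_nhds_unique hF' hF ▸ hg.hasSum

theorem hasSum_antidiagonal_of_hasSum_mul_exp {𝕜 : Type*} [RCLike 𝕜] {a b : ℕ → 𝕜} {x s : 𝕜}
    (hsummable : Summable fun k ↦ ‖a k * x ^ k‖ * Real.exp ‖b k * x‖)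
    (hs : HasSum (fun k ↦ a k * x ^ k * NormedSpace.exp (b k * x)) s) :
    HasSum (fun n ↦ (∑ p ∈ antidiagonal n, a p.1 * (b p.1 ^ p.2 / p.2 !)) * x ^ n) s := by
  set g : ℕ × ℕ → 𝕜 := fun p ↦ a p.1 * x ^ p.1 * ((b p.1 * x) ^ p.2 / p.2 !) with hg
  have hnorm_row (k : ℕ) :
      HasSum (fun m ↦ ‖g (k, m)‖) (‖a k * x ^ k‖ * Real.exp ‖b k * x‖) := by
    simpa [hg, Real.exp_eq_exp_ℝ] using
      (NormedSpace.expSeries_div_hasSum_exp ‖b k * x‖).mul_left ‖a k * x ^ k‖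
  have hg_summable : Summable g := by
    refine .of_norm ((summable_prod_of_nonneg fun _ ↦ norm_nonneg _).2
      ⟨fun k ↦ (hnorm_row k).summable, ?_⟩)
    simpa only [(hnorm_row _).tsum_eq] using hsummable
  have hrows : HasSum (fun k ↦ a k * x ^ k * NormedSpace.exp (b k * x)) (∑' p, g p) :=
    hg_summable.hasSum.prod_fiberwise fun k ↦
      (NormedSpace.expSeries_div_hasSum_exp (b k * x)).mul_left (a k * x ^ k)
  have hdiag (n : ℕ) :
      (∑ p ∈ antidiagonal n, a p.1 * (b p.1 ^ p.2 / p.2 !)) * x ^ n =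
        ∑ p ∈ antidiagonal n, g p := by
    rw [sum_mul]
    refine sum_congr rfl fun p hp ↦ ?_
    simp only [hg]
    rw [← mem_antidiagonal.1 hp, pow_add, mul_pow]
    ring
  rw [hs.unique hrows]
  simp only [hdiag]
  exact (HasAntidiagonal.sigmaAntidiagonalEquivProd.hasSum_iff.2 hg_summable.hasSum).sigma
    fun n ↦ Finset.hasSum (antidiagonal n) g

theorem sum_range_neg_one_pow_mul_choose_mul_succ_pow {R : Type*} [CommRing R] (n : ℕ) :
    ∑ k ∈ range (n + 1), (-1 : R) ^ (n - k) * (n + 1).choose (k + 1) * (k + 1) ^ n =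
      if n = 0 then 1 else 0 := by
  have hdiff := congrFun (fwdDiff_iter_pow_eq_zero_of_lt (R := R) n.lt_succ_self) 0
  rw [fwdDiff_iter_eq_sum_shift, sum_range_succ'] at hdiff
  rcases eq_or_ne n 0 with rfl | hn
  · simp
  · simpa [hn] using hdiff

/-- The coefficient of `z ^ (k + 1)` in the tree function `∑_{k ≥ 1} k ^ (k - 1) z ^ k / k!`.
The shift of the index avoids the case distinction at `k = 0`. -/
noncomputable def treeCoeff (k : ℕ) : ℝ := (k + 1) ^ k / (k + 1)!

theorem treeCoeff_nonneg (k : ℕ) : 0 ≤ treeCoeff k := by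
  unfold treeCoeff
  positivity

theorem treeCoeff_le_exp (k : ℕ) : treeCoeff k ≤ Real.exp (k + 1) := calc
  treeCoeff k ≤ ((k : ℝ) + 1) ^ k / k ! := by
    unfold treeCoeff
    gcongr
    exact k.le_succ
  _ ≤ Real.exp (k + 1) := Real.pow_div_factorial_le_exp _ (by positivity) k

theorem sum_antidiagonal_treeCoeff_mul (n : ℕ) :
    ∑ p ∈ antidiagonal n, treeCoeff p.1 * ((-(p.1 + 1 : ℝ)) ^ p.2 / p.2 !) =
      if n = 0 then 1 else 0 := by
  have hterm : ∀ k ∈ range (n + 1),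
      treeCoeff k * ((-(k + 1 : ℝ)) ^ (n - k) / (n - k)!) =
        (-1) ^ (n - k) * (n + 1).choose (k + 1) * (k + 1) ^ n / (n + 1)! := by
    intro k hk
    obtain ⟨m, rfl⟩ := Nat.exists_eq_add_of_le (mem_range_succ_iff.1 hk)
    have hchoose : ((k + m + 1).choose (k + 1) : ℝ) = (k + m + 1)! / ((k + 1)! * m !) := by
      rw [Nat.cast_choose ℝ (by lia), show k + m + 1 - (k + 1) = m by lia]
    rw [Nat.add_sub_cancel_left, hchoose, treeCoeff, neg_pow, pow_add]
    field_simp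
  rw [Nat.sum_antidiagonal_eq_sum_range_succ_mk, sum_congr rfl hterm, ← sum_div,
    sum_range_neg_one_pow_mul_choose_mul_succ_pow]
  split_ifs with hn <;> simp [hn]

theorem summable_norm_treeCoeff_mul_exp {x : ℝ} (hx : |x| * Real.exp (1 + |x|) < 1) :
    Summable fun k : ℕ ↦ ‖treeCoeff k * x ^ k‖ * Real.exp ‖-(k + 1 : ℝ) * x‖ := by
  refine .of_nonneg_of_le (fun k ↦ by positivity) (fun k ↦ ?_)
    ((summable_geometric_of_lt_one (by positivity) hx).mul_left (Real.exp (1 + |x|)))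
  have hnorm : ‖-(k + 1 : ℝ) * x‖ = (k + 1) * |x| := by
    rw [norm_mul, norm_neg, Real.norm_of_nonneg (by positivity), Real.norm_eq_abs]
  calc ‖treeCoeff k * x ^ k‖ * Real.exp ‖-(k + 1 : ℝ) * x‖
      = treeCoeff k * |x| ^ k * Real.exp ((k + 1) * |x|) := by
        rw [hnorm, norm_mul, norm_pow, Real.norm_of_nonneg (treeCoeff_nonneg k), Real.norm_eq_abs]
    _ ≤ Real.exp (k + 1) * |x| ^ k * Real.exp ((k + 1) * |x|) := by
        gcongr
        exact treeCoeff_le_exp k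
    _ = Real.exp (1 + |x|) * (|x| * Real.exp (1 + |x|)) ^ k := by
        rw [mul_pow, ← Real.exp_nat_mul, mul_right_comm, ← Real.exp_add, mul_left_comm,
          ← Real.exp_add, mul_comm]
        ring_nf

theorem treeCoeff_mul_pow_mul_exp_neg (x : ℝ) (k : ℕ) :
    treeCoeff k * x ^ k * Real.exp (-(k + 1) * x) =
      Real.exp (-x) * (treeCoeff k * (x * Real.exp (-x)) ^ k) := by
  rw [mul_pow, ← Real.exp_nat_mul, show -((k : ℝ) + 1) * x = -x + k * -x by ring, Real.exp_add]
  ring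

theorem hasSum_treeCoeff_mul_pow_of_abs_mul_exp_lt_one {x : ℝ} (hx : |x| * Real.exp (1 + |x|) < 1) :
    HasSum (fun k ↦ treeCoeff k * (x * Real.exp (-x)) ^ k) (Real.exp x) := by
  have hsummable := summable_norm_treeCoeff_mul_exp hx
  have hrows : Summable fun k : ℕ ↦
      treeCoeff k * x ^ k * NormedSpace.exp (-(k + 1 : ℝ) * x) := by
    refine .of_norm_bounded hsummable fun k ↦ ?_
    rw [norm_mul, ← Real.exp_eq_exp_ℝ, Real.norm_of_nonneg (Real.exp_nonneg _)]
    gcongr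
    exact Real.le_norm_self _
  have hdiag := hasSum_antidiagonal_of_hasSum_mul_exp hsummable hrows.hasSum
  simp only [sum_antidiagonal_treeCoeff_mul, ite_mul, zero_mul, one_mul] at hdiag
  have hone := hdiag.unique (hasSum_single 0 (by simp +contextual))
  simp only [← Real.exp_eq_exp_ℝ, treeCoeff_mul_pow_mul_exp_neg] at hrows hone
  have h := (hone ▸ hrows.hasSum).mul_left (Real.exp x)
  simpa [← mul_assoc, ← Real.exp_add] using h

theorem hasFPowerSeriesOnBall_tsum_treeCoeff :
    HasFPowerSeriesOnBall (fun z : ℝ ↦ ∑' k, treeCoeff k * z ^ k)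
      (FormalMultilinearSeries.ofScalars ℝ treeCoeff) 0 (ENNReal.ofReal (Real.exp (-1))) := by
  set P := FormalMultilinearSeries.ofScalars ℝ treeCoeff with hP
  have hradius : ENNReal.ofReal (Real.exp (-1)) ≤ P.radius := by
    refine P.le_radius_of_bound (Real.exp 1) fun k ↦ ?_
    rw [hP, FormalMultilinearSeries.ofScalars_norm, Real.norm_of_nonneg (treeCoeff_nonneg k),
      Real.coe_toNNReal _ (Real.exp_nonneg _)]
    calc treeCoeff k * Real.exp (-1) ^ k
        ≤ Real.exp (k + 1) * Real.exp (-1) ^ k := by gcongr; exact treeCoeff_le_exp k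
      _ = Real.exp 1 := by rw [← Real.exp_nat_mul, ← Real.exp_add]; ring_nf
  have hpos : 0 < ENNReal.ofReal (Real.exp (-1)) := ENNReal.ofReal_pos.2 (Real.exp_pos _)
  have hsum : P.sum = fun z ↦ ∑' k, treeCoeff k * z ^ k := by
    ext z
    simp [hP, FormalMultilinearSeries.sum, mul_comm]
  exact hsum ▸ (P.hasFPowerSeriesOnBall (hpos.trans_le hradius)).mono hpos hradius

theorem mul_exp_neg_lt_exp_neg_one {x : ℝ} (hx : x ≠ 1) : x * Real.exp (-x) < Real.exp (-1) := by
  have hlt : x < Real.exp (x - 1) := by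
    simpa using Real.add_one_lt_exp (sub_ne_zero.2 hx)
  calc x * Real.exp (-x) < Real.exp (x - 1) * Real.exp (-x) := by gcongr
    _ = Real.exp (-1) := by rw [← Real.exp_add]; ring_nf

theorem hasSum_treeCoeff_mul_pow_of_lt_one {x : ℝ} (hx₀ : 0 ≤ x) (hx₁ : x < 1) :
    HasSum (fun k ↦ treeCoeff k * (x * Real.exp (-x)) ^ k) (Real.exp x) := by
  have hseries := hasFPowerSeriesOnBall_tsum_treeCoeff
  have hmem : Set.MapsTo (fun y : ℝ ↦ y * Real.exp (-y)) (Set.Ico 0 1)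
      (Metric.eball 0 (ENNReal.ofReal (Real.exp (-1)))) := by
    intro y hy
    rw [Metric.eball_ofReal, mem_ball_zero_iff,
      Real.norm_of_nonneg (mul_nonneg hy.1 (Real.exp_nonneg _))]
    exact mul_exp_neg_lt_exp_neg_one hy.2.ne
  have hanalytic : AnalyticOnNhd ℝ (fun y ↦ ∑' k, treeCoeff k * (y * Real.exp (-y)) ^ k)
      (Set.Ico 0 1) :=
    hseries.analyticOnNhd.comp (fun y _ ↦ by fun_prop) hmem
  have hsmall : ∀ᶠ y : ℝ in 𝓝 0, |y| * Real.exp (1 + |y|) < 1 :=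
    (show Continuous fun y : ℝ ↦ |y| * Real.exp (1 + |y|) by fun_prop).continuousAt.eventually_lt
      continuousAt_const (by simp)
  have heq : Set.EqOn (fun y ↦ ∑' k, treeCoeff k * (y * Real.exp (-y)) ^ k) Real.exp
      (Set.Ico 0 1) :=
    hanalytic.eqOn_of_preconnected_of_eventuallyEq (fun y _ ↦ by fun_prop) isPreconnected_Ico
      ⟨le_rfl, one_pos⟩
      (hsmall.mono fun y hy ↦ (hasSum_treeCoeff_mul_pow_of_abs_mul_exp_lt_one hy).tsum_eq)
  have h := hseries.hasSum (hmem ⟨hx₀, hx₁⟩)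
  simp only [zero_add, FormalMultilinearSeries.ofScalars_apply_eq, smul_eq_mul] at h
  exact heq ⟨hx₀, hx₁⟩ ▸ h

theorem hasSum_treeCoeff_mul_exp_neg_one_pow :
    HasSum (fun k ↦ treeCoeff k * Real.exp (-1) ^ k) (Real.exp 1) := by
  have hmem : ∀ᶠ x : ℝ in 𝓝[<] 1, x ∈ Set.Ioo 0 1 := Ioo_mem_nhdsLT one_pos
  refine hasSum_of_tendsto_of_nonneg_of_le
    (hmem.mono fun x hx ↦ hasSum_treeCoeff_mul_pow_of_lt_one hx.1.le hx.2) ?_ ?_ (fun k ↦ ?_)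
    Real.continuous_exp.continuousAt.continuousWithinAt
  · filter_upwards [hmem] with x hx k
    exact mul_nonneg (treeCoeff_nonneg k) (pow_nonneg (mul_nonneg hx.1.le (Real.exp_nonneg _)) k)
  · filter_upwards [hmem] with x hx k
    have := hx.1
    gcongr
    · exact treeCoeff_nonneg k
    · exact Real.mul_exp_neg_le_exp_neg_one x
  · have hcont : Continuous fun x : ℝ ↦ treeCoeff k * (x * Real.exp (-x)) ^ k := by fun_prop
    simpa using (hcont.tendsto 1).mono_left nhdsWithin_le_nhds

theorem hasSum_borel_one_general {x : ℝ} (hx₀ : 0 ≤ x) (hx₁ : x ≤ 1) :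
    HasSum (fun k : ℕ ↦
      if k = 0 then 0 else (x * k) ^ (k - 1) * Real.exp (-(x * k)) / (Nat.factorial k)) 1 := by
  have htree : HasSum (fun k ↦ treeCoeff k * (x * Real.exp (-x)) ^ k) (Real.exp x) := by
    rcases hx₁.lt_or_eq with hlt | rfl
    · exact hasSum_treeCoeff_mul_pow_of_lt_one hx₀ hlt
    · simpa using hasSum_treeCoeff_mul_exp_neg_one_pow
  rw [← hasSum_nat_add_iff' 1]
  convert! htree.mul_left (Real.exp (-x)) using 1
  · ext k
    rw [← treeCoeff_mul_pow_mul_exp_neg, treeCoeff, if_neg k.succ_ne_zero]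
    push_cast
    rw [mul_pow]
    ring_nf
  · simp [← Real.exp_add]

/-- `∑_{k≥1} k^{k-1} e^{-k}/k! = 1` (the series converges and its sum is `1`). -/
theorem hasSum_borel_one :
    HasSum (fun k : ℕ =>
      if k = 0 then 0 else (k : ℝ) ^ (k - 1) * Real.exp (-(k : ℝ)) / (Nat.factorial k))
      1 := by
  simpa using hasSum_borel_one_general zero_le_one le_rfl
end

section
/- For every integer b ≥ 2, 2(b−1)·b^{b−2} = ∑_{c=1}^{b−1} binom(b,c) · c^{c−1} · (b−c)^{b−c−1}. -/
/-!
The Abel polynomials `A_n(x) = x (x - n a)^(n-1)` satisfy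
`A_n(x + y) = ∑ C(n,k) A_k(x) A_{n-k}(y)`. The linear coefficient of `A_n` is `(-n a)^(n-1)`, so
for `a = -1` the identity for trees is the coefficient of `x y` on both sides.

The addition formula follows from Abel's identity
`(x + y)^n = ∑ C(n,k) A_k(x) (y + k a)^(n-k)`. Both sides of the latter are Appell sequences in `y`,
and such a sequence is determined by its values at one point. At `y = -x` the sum is, up to sign
and a factor `x`, the `n`-th finite difference of a polynomial of degree `n - 1`.
-/

open Polynomial

section AppellSequence

variable {R : Type*} [CommSemiring R]

theorem sum_choose_mul_add_add_pow (c t : ℕ → R) (x y : R) (n : ℕ) :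
    ∑ k ∈ Finset.range (n + 1), n.choose k * c k * (x + (y + t k)) ^ (n - k) =
      ∑ j ∈ Finset.range (n + 1), n.choose j * x ^ j *
        ∑ k ∈ Finset.range (n - j + 1), (n - j).choose k * c k * (y + t k) ^ (n - j - k) := by
  simp only [add_pow x, Finset.mul_sum]
  rw [Finset.sum_comm' (t' := Finset.range (n + 1)) (s' := fun j ↦ Finset.range (n - j + 1))
    (by simp only [Finset.mem_range]; omega)]
  refine Finset.sum_congr rfl fun j _ ↦ Finset.sum_congr rfl fun k _ ↦ ?_
  have hchoose : n.choose k * (n - k).choose j = n.choose j * (n - j).choose k := by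
    have h := Nat.choose_mul (n := n) (Nat.le_add_right k j)
    rw [Nat.choose_symm_add, Nat.choose_mul (Nat.le_add_left j k)] at h
    simpa only [Nat.add_sub_cancel, Nat.add_sub_cancel_left] using h.symm
  calc
    _ = ((n.choose k * (n - k).choose j : ℕ) : R) * (c k * x ^ j * (y + t k) ^ (n - k - j)) := by
      push_cast
      ring
    _ = _ := by
      rw [hchoose, Nat.sub_right_comm]
      push_cast
      ring

end AppellSequence

theorem sum_neg_one_pow_mul_choose_mul_sub_pow_eq_zero {R : Type*} [CommRing R] (a x : R)
    {m n : ℕ} (hmn : m < n) :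
    ∑ k ∈ Finset.range (n + 1), (-1) ^ (n - k) * n.choose k * (x - k * a) ^ m = 0 := by
  let P : R[X] := (C x - C a * X) ^ m
  have hP : P.natDegree ≤ m * 1 := natDegree_pow_le_of_le m (by compute_degree)
  have hdiff := congrFun (fwdDiff_iter_eq_zero_of_degree_lt (by omega : P.natDegree < n)) 0
  rw [fwdDiff_iter_eq_sum_shift] at hdiff
  simpa [P, mul_comm a] using hdiff

section AbelPolynomial

variable {R S : Type*} [CommRing R] [CommRing S]

/-- The Abel polynomial `X (X - n a)^(n-1)`, with the value `1` for `n = 0`. -/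
noncomputable def abelPolynomial (a : R) : ℕ → R[X]
  | 0 => 1
  | n + 1 => X * (X - C (((n + 1 : ℕ) : R) * a)) ^ n

namespace abelPolynomial

@[simp]
theorem zero (a : R) : abelPolynomial a 0 = 1 := rfl

theorem succ (a : R) (n : ℕ) :
    abelPolynomial a (n + 1) = X * (X - C (((n + 1 : ℕ) : R) * a)) ^ n := rfl

theorem map (f : R →+* S) (a : R) (n : ℕ) :
    (abelPolynomial a n).map f = abelPolynomial (f a) n := by
  cases n <;> simp [succ]

theorem eval_succ (a x : R) (n : ℕ) :
    (abelPolynomial a (n + 1)).eval x = x * (x - (n + 1 : ℕ) * a) ^ n := by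
  simp [succ]

theorem coeff_one (a : R) {n : ℕ} (hn : n ≠ 0) :
    (abelPolynomial a n).coeff 1 = (-(n * a)) ^ (n - 1) := by
  obtain ⟨n, rfl⟩ := Nat.exists_eq_succ_of_ne_zero hn
  simp [succ, coeff_X_mul, coeff_zero_eq_eval_zero]

theorem coeff_two (a : R) (n : ℕ) :
    (abelPolynomial a n).coeff 2 = (n - 1 : ℕ) * (-(n * a)) ^ (n - 2) := by
  rcases n with _ | n
  · simp [Polynomial.coeff_one]
  · rw [succ, coeff_X_mul, sub_eq_add_neg, ← C_neg, coeff_X_add_C_pow, Nat.choose_one_right,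
      mul_comm, Nat.add_sub_cancel]
    rfl

theorem eval_mul_sub_pow (a x : R) {k n : ℕ} (hk : k ≤ n + 1) :
    (abelPolynomial a k).eval x * (x - k * a) ^ (n + 1 - k) = x * (x - k * a) ^ n := by
  rcases k with _ | k
  · simp [pow_succ']
  · rw [eval_succ, mul_assoc, ← pow_add, Nat.add_sub_add_right, Nat.add_sub_cancel' (by omega)]

theorem eval_eq_add (a x : R) (n : ℕ) :
    (abelPolynomial a n).eval x = (x - n * a) ^ n + n * a * (x - n * a) ^ (n - 1) := by
  rcases n with _ | n
  · simp
  · rw [eval_succ, Nat.add_sub_cancel]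
    ring

theorem sum_choose_mul_eval_mul_neg_add_pow (a x : R) (n : ℕ) :
    ∑ k ∈ Finset.range (n + 1),
      n.choose k * (abelPolynomial a k).eval x * (-x + k * a) ^ (n - k) = 0 ^ n := by
  rcases n with _ | n
  · simp
  rw [zero_pow n.succ_ne_zero, ← mul_zero x,
    ← sum_neg_one_pow_mul_choose_mul_sub_pow_eq_zero a x n.lt_succ_self, Finset.mul_sum]
  refine Finset.sum_congr rfl fun k hk ↦ ?_
  have hk : k ≤ n + 1 := Finset.mem_range_succ_iff.mp hk
  rw [show -x + k * a = -(x - k * a) by ring, neg_pow]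
  linear_combination ((n + 1).choose k * (-1) ^ (n + 1 - k) : R) * eval_mul_sub_pow a x hk

theorem sum_choose_mul_eval_mul_add_pow (a x y : R) (n : ℕ) :
    ∑ k ∈ Finset.range (n + 1),
      n.choose k * (abelPolynomial a k).eval x * (y + k * a) ^ (n - k) = (x + y) ^ n := by
  have happell := sum_choose_mul_add_add_pow (fun k ↦ (abelPolynomial a k).eval x)
    (fun k ↦ k * a) (x + y) (-x) n
  simp only [sum_choose_mul_eval_mul_neg_add_pow] at happell
  calc
    _ = ∑ k ∈ Finset.range (n + 1), n.choose k * (abelPolynomial a k).eval x *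
          (x + y + (-x + k * a)) ^ (n - k) := by
      simp only [show ∀ z, x + y + (-x + z) = y + z by intro z; ring]
    _ = ∑ j ∈ Finset.range (n + 1), (x + y) ^ j * 0 ^ (n - j) * n.choose j := by
      rw [happell]
      exact Finset.sum_congr rfl fun j _ ↦ by ring
    _ = (x + y) ^ n := by rw [← add_pow, add_zero]

theorem eval_add (a x y : R) (n : ℕ) :
    (abelPolynomial a n).eval (x + y) = ∑ k ∈ Finset.range (n + 1),
      n.choose k * (abelPolynomial a k).eval x * (abelPolynomial a (n - k)).eval y := by
  rcases n with _ | n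
  · simp
  set z : R := y - (n + 1 : ℕ) * a with hz
  have hshift {k : ℕ} (hk : k ≤ n + 1) : y - (n + 1 - k : ℕ) * a = z + k * a := by
    rw [hz, Nat.cast_sub hk]
    ring
  have hlower : ∑ k ∈ Finset.range (n + 2), (n + 1).choose k * (abelPolynomial a k).eval x *
      ((n + 1 - k : ℕ) * a * (z + k * a) ^ (n + 1 - k - 1)) =
        (n + 1 : ℕ) * a * (x + z) ^ n := by
    rw [Finset.sum_range_succ, ← sum_choose_mul_eval_mul_add_pow a x z n, Finset.mul_sum]
    simp only [Nat.sub_self, Nat.cast_zero, zero_mul, mul_zero, add_zero]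
    refine Finset.sum_congr rfl fun k _ ↦ ?_
    have hchoose := congrArg (Nat.cast (R := R)) (Nat.choose_mul_succ_eq n k)
    simp only [Nat.cast_mul] at hchoose
    rw [Nat.sub_right_comm, Nat.add_sub_cancel]
    linear_combination
      -((abelPolynomial a k).eval x * a * (z + k * a) ^ (n - k)) * hchoose
  calc
    _ = (x + z) ^ (n + 1) + (n + 1 : ℕ) * a * (x + z) ^ n := by
      rw [eval_eq_add, Nat.add_sub_cancel, add_sub_assoc]
    _ = _ := by
      rw [← sum_choose_mul_eval_mul_add_pow a x z (n + 1), ← hlower, ← Finset.sum_add_distrib]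
      refine Finset.sum_congr rfl fun k hk ↦ ?_
      rw [eval_eq_add a y, hshift (Finset.mem_range_succ_iff.mp hk)]
      ring

theorem taylor_eq_sum (a x : R) (n : ℕ) :
    taylor x (abelPolynomial a n) = ∑ k ∈ Finset.range (n + 1),
      C (n.choose k * (abelPolynomial a k).eval x) * abelPolynomial a (n - k) := by
  have heval (k : ℕ) : (abelPolynomial (C a) k).eval (C x) = C ((abelPolynomial a k).eval x) := by
    rw [← map, eval_map_apply]
  have heval_comp (p : R[X]) (k : ℕ) :
      (abelPolynomial (C a) k).eval p = (abelPolynomial a k).comp p := by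
    rw [← map, eval_map, comp]
  rw [taylor_apply, ← heval_comp, add_comm, eval_add]
  simp [heval, heval_comp]

theorem derivative_eq_sum (a : R) (n : ℕ) :
    derivative (abelPolynomial a n) = ∑ k ∈ Finset.range (n + 1),
      C (n.choose k * (abelPolynomial a (n - k)).coeff 1) * abelPolynomial a k := by
  have h := congrArg (coeff · 1) (taylor_eq_sum (C a) X n)
  simp only [taylor_coeff_one, finsetSum_coeff, coeff_C_mul, ← map, derivative_map, eval_map,
    eval₂_C_X, coeff_map] at h
  rw [h]
  refine Finset.sum_congr rfl fun k _ ↦ ?_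
  rw [C_mul, C_eq_natCast]
  ring

theorem two_mul_coeff_two_eq_sum (a : R) (n : ℕ) :
    2 * (abelPolynomial a n).coeff 2 = ∑ k ∈ Finset.range (n + 1),
      n.choose k * (abelPolynomial a k).coeff 1 * (abelPolynomial a (n - k)).coeff 1 := by
  have h := congrArg (coeff · 1) (derivative_eq_sum a n)
  simp only [coeff_derivative, finsetSum_coeff, coeff_C_mul] at h
  calc
    _ = (abelPolynomial a n).coeff (1 + 1) * ((1 : ℕ) + 1) := by push_cast; ring
    _ = _ := by
      rw [h]
      exact Finset.sum_congr rfl fun k _ ↦ by ring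

end abelPolynomial

end AbelPolynomial

/-- For every integer `b ≥ 2`,
`2(b-1) b^{b-2} = ∑_{c=1}^{b-1} C(b,c) c^{c-1} (b-c)^{b-c-1}`. -/
theorem oriented_edge_tree_identity (b : ℕ) (hb : 2 ≤ b) :
    2 * (b - 1) * b ^ (b - 2) =
      ∑ c ∈ Finset.Icc 1 (b - 1),
        Nat.choose b c * c ^ (c - 1) * (b - c) ^ (b - c - 1) := by
  have hcoeff {m : ℕ} (hm : m ≠ 0) :
      (abelPolynomial (-1 : ℤ) m).coeff 1 = (m : ℤ) ^ (m - 1) := by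
    simp [abelPolynomial.coeff_one _ hm]
  have hmain := abelPolynomial.two_mul_coeff_two_eq_sum (-1 : ℤ) b
  rw [abelPolynomial.coeff_two, mul_neg_one, neg_neg, ← mul_assoc] at hmain
  zify
  rw [hmain]
  symm
  refine Finset.sum_subset_zero_on_sdiff (fun c hc ↦ ?_) (fun c hc ↦ ?_) (fun c hc ↦ ?_)
  · rw [Finset.mem_Icc] at hc
    exact Finset.mem_range.mpr (by omega)
  · obtain rfl | rfl : c = 0 ∨ c = b := by
      simp only [Finset.mem_sdiff, Finset.mem_range, Finset.mem_Icc] at hc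
      omega
    all_goals simp [Polynomial.coeff_one]
  · rw [Finset.mem_Icc] at hc
    rw [hcoeff (by omega), hcoeff (by omega)]
end

section
/- For every integer b ≥ 2, (b−1)·b^{b−1} = ∑_{c=1}^{b−1} binom(b,c) · c^{c} · (b−c)^{b−c−1}. -/
/-!
Including the term `c = 0`, the claim is `∑_{c=0}^n C(n+1,c) c^c (n+1-c)^{n-c} = (n+1)^{n+1}` with
`b = n + 1`, an instance of Abel's binomial theorem. To prove the latter, expand `(y - z)^c`, with
`z = x + n + 1 - c`, in powers of `y` and exchange the order of summation. The coefficient of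
`y^{n-r}` is then a binomial multiple of an alternating sum of `r`-th powers, namely the `(r+1)`-st
finite difference of `t ↦ t^r` with one term missing. Since that difference vanishes, the
alternating sum is minus the missing term, that is `(-x)^r`.
-/

open Finset

theorem sum_antidiagonal_antidiagonal_assoc {A M : Type*} [AddMonoid A] [HasAntidiagonal A]
    [AddCommMonoid M] (n : A) (f : A → A → A → M) :
    ∑ p ∈ antidiagonal n, ∑ q ∈ antidiagonal p.1, f q.1 q.2 p.2 =
      ∑ p ∈ antidiagonal n, ∑ q ∈ antidiagonal p.2, f p.1 q.1 q.2 := by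
  simp only [sum_sigma']
  refine sum_nbij' (fun s ↦ ⟨(s.2.1, s.2.2 + s.1.2), (s.2.2, s.1.2)⟩)
    (fun s ↦ ⟨(s.1.1 + s.2.1, s.2.2), (s.1.1, s.2.1)⟩) ?_ ?_ ?_ ?_ ?_ <;>
    rintro ⟨⟨_, _⟩, ⟨_, _⟩⟩ <;>
    simp only [mem_sigma, HasAntidiagonal.mem_antidiagonal, implies_true] <;>
    rintro ⟨rfl, rfl⟩ <;>
    simp only [add_assoc, and_self]

theorem choose_add_mul_choose (a b c : ℕ) :
    (a + b + c).choose (a + b) * (a + b).choose a = (a + b + c).choose a * (b + c).choose b := by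
  rw [Nat.choose_mul (Nat.le_add_right a b), add_assoc, Nat.add_sub_cancel_left,
    Nat.add_sub_cancel_left]

section CommRing

variable {R : Type*} [CommRing R]

theorem choose_mul_sub_pow (y z : R) (a c : ℕ) :
    (a + c).choose a * (y - z) ^ a =
      ∑ p ∈ antidiagonal a,
        (a + c).choose p.1 * y ^ p.1 * ((-1) ^ p.2 * (p.2 + c).choose p.2 * z ^ p.2) := by
  rw [sub_eq_add_neg, (Commute.all _ _).add_pow', mul_sum]
  refine sum_congr rfl fun p hp ↦ ?_
  obtain rfl := mem_antidiagonal.mp hp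
  have hchoose := congr_arg (Nat.cast (R := R)) (choose_add_mul_choose p.1 p.2 c)
  push_cast at hchoose
  rw [nsmul_eq_mul, neg_pow]
  linear_combination (y ^ p.1 * (-1) ^ p.2 * z ^ p.2) * hchoose

theorem sum_neg_one_pow_mul_choose_mul_add_pow (x : R) {j n : ℕ} (h : j < n) :
    ∑ p ∈ antidiagonal n, (-1) ^ p.1 * n.choose p.1 * (x + p.2) ^ j = 0 := by
  have hΔ := congr_fun (fwdDiff_iter_pow_eq_zero_of_lt (R := R) h) x
  rw [fwdDiff_iter_eq_sum_shift, Pi.zero_apply] at hΔ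
  rw [← Nat.sum_antidiagonal_swap, Nat.sum_antidiagonal_eq_sum_range_succ_mk, ← hΔ]
  refine sum_congr rfl fun k hk ↦ ?_
  simp [Nat.choose_symm (mem_range_succ_iff.mp hk)]

theorem sum_neg_one_pow_mul_choose_succ_mul_add_succ_pow (x : R) (n : ℕ) :
    ∑ p ∈ antidiagonal n, (-1) ^ p.1 * (n + 1).choose p.1 * (x + (p.2 + 1)) ^ n = (-x) ^ n := by
  have h := sum_neg_one_pow_mul_choose_mul_add_pow x n.lt_succ_self
  rw [Nat.sum_antidiagonal_succ', Nat.choose_self] at h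
  push_cast at h
  rw [neg_pow x]
  linear_combination h

/-- Abel's binomial theorem with a factor `x` cancelled: multiplied by `x`, the right-hand side
becomes `y ^ (n + 1) - (y - x) ^ (n + 1)`. -/
theorem abel_sum_choose_succ_mul_sub_pow_mul_add_pow (x y : R) (n : ℕ) :
    ∑ p ∈ antidiagonal n,
        (n + 1).choose p.1 * (y - (x + (p.2 + 1))) ^ p.1 * (x + (p.2 + 1)) ^ p.2 =
      ∑ p ∈ antidiagonal n, (n + 1).choose p.1 * y ^ p.1 * (-x) ^ p.2 := by
  let term (a b c : ℕ) : R :=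
    (n + 1).choose a * y ^ a * ((-1) ^ b * (b + (c + 1)).choose b * (x + (c + 1)) ^ (b + c))
  calc
    _ = ∑ p ∈ antidiagonal n, ∑ q ∈ antidiagonal p.1, term q.1 q.2 p.2 := by
      refine sum_congr rfl fun p hp ↦ ?_
      have hn : n + 1 = p.1 + (p.2 + 1) := by rw [← add_assoc, mem_antidiagonal.mp hp]
      simp only [term, hn, choose_mul_sub_pow, sum_mul, pow_add _ _ p.2, mul_assoc]
    _ = ∑ p ∈ antidiagonal n, ∑ q ∈ antidiagonal p.2, term p.1 q.1 q.2 :=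
      sum_antidiagonal_antidiagonal_assoc n term
    _ = _ := by
      refine sum_congr rfl fun p _ ↦ ?_
      rw [← sum_neg_one_pow_mul_choose_succ_mul_add_succ_pow, mul_sum]
      refine sum_congr rfl fun q hq ↦ ?_
      rw [← mem_antidiagonal.mp hq, add_assoc]

theorem abel_sum_choose_succ_mul_sub_succ_pow_mul_succ_pow (y : R) (n : ℕ) :
    ∑ p ∈ antidiagonal n, (n + 1).choose p.1 * (y - (p.2 + 1)) ^ p.1 * (p.2 + 1 : R) ^ p.2 =
      (n + 1) * y ^ n := by
  have habel := abel_sum_choose_succ_mul_sub_pow_mul_add_pow 0 y n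
  simp only [zero_add, neg_zero] at habel
  rw [habel, Nat.sum_antidiagonal_eq_sum_range_succ_mk, sum_range_succ, sum_eq_zero]
  · simp
  · intro k hk
    rw [zero_pow (Nat.sub_ne_zero_of_lt (mem_range.mp hk)), mul_zero]

end CommRing

theorem sum_choose_succ_mul_pow_self_mul_succ_pow (n : ℕ) :
    ∑ p ∈ antidiagonal n, (n + 1).choose p.1 * p.1 ^ p.1 * (p.2 + 1) ^ p.2 = (n + 1) ^ (n + 1) := by
  zify
  rw [pow_succ', ← abel_sum_choose_succ_mul_sub_succ_pow_mul_succ_pow]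
  refine sum_congr rfl fun p hp ↦ ?_
  simp [← mem_antidiagonal.mp hp]

/-- For every integer `b ≥ 2`,
`(b-1) b^{b-1} = ∑_{c=1}^{b-1} C(b,c) c^c (b-c)^{b-c-1}`. -/
theorem tree_identity_cc (b : ℕ) (hb : 2 ≤ b) :
    (b - 1) * b ^ (b - 1) =
      ∑ c ∈ Finset.Icc 1 (b - 1),
        Nat.choose b c * c ^ c * (b - c) ^ (b - c - 1) := by
  obtain ⟨n, rfl⟩ := Nat.exists_eq_add_of_le' (one_le_two.trans hb)
  have hsplit : (n + 1) ^ n +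
      ∑ c ∈ Icc 1 n, (n + 1).choose c * c ^ c * (n + 1 - c) ^ (n + 1 - c - 1) =
        (n + 1) ^ (n + 1) := by
    rw [← sum_choose_succ_mul_pow_self_mul_succ_pow, Nat.sum_antidiagonal_eq_sum_range_succ_mk,
      Nat.range_succ_eq_Icc_zero, ← add_sum_Ioc_eq_sum_Icc n.zero_le]
    congr 1
    · simp
    · refine sum_congr rfl fun c hc ↦ ?_
      rw [Nat.sub_add_comm (mem_Icc.mp hc).2, Nat.add_sub_cancel]
  rw [Nat.add_sub_cancel]
  linarith [pow_succ' (n + 1) n]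
end

section
/- Asymptotically almost surely, the number of subtrees of a uniformly random labelled tree on n vertices is at most 1.89756^n; that is, the probability that c(𝒯_n) ≤ 1.89756^n tends to 1 as n → ∞. -/
/-!
The proof is a first moment argument. A pair `(T, S)` of a labelled tree on `n` vertices and a
subtree `S` with `k` vertices is determined by `S` and the parent map of `T` rooted at a vertex of
`S`; this map sends `S` into `S`, because `S` is connected. Hence there are at most
`∑ k, n.choose k * k ^ k * n ^ (n - k)` such pairs, and each term is at most
`n ^ n * exp (1 / e) ^ n`.

On the other hand there are at least `n ^ (n - 2)` labelled trees. This half of Cayley's formula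
follows from Pitman's double counting: comparing the numbers of rooted forests with `j` and `j + 1`
edges shows that there are at least `n ^ (n - 1)` rooted trees.

So the expected number of subtrees is at most `(n + 1) * n ^ 2 * exp (1 / e) ^ n`, and by Markov's
inequality there are asymptotically almost surely at most `c ^ n` of them for every
`c > exp (1 / e) ≈ 1.445`.
-/

open Filter Topology

/-- The number of subtrees of a graph `G` on `Fin n`: the number of (nonempty) vertex
subsets inducing a connected subgraph. -/
noncomputable def subtreeCount {n : ℕ} (G : SimpleGraph (Fin n)) : ℕ :=
  Nat.card {S : Set (Fin n) // (G.induce S).Connected}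

open Finset (univ)

/-! ### Rooted forests -/

section RootedForest

variable {V : Type*} {p : V → V}

/-- A rooted forest on `V`, encoded by its parent map: `p x` is the parent of `x`, and the roots
are the fixed points of `p`. Acyclicity is expressed by a height that drops along every edge. -/
def IsRootedForest (p : V → V) : Prop :=
  ∃ h : V → ℕ, ∀ x, p x ≠ x → h (p x) < h x

namespace IsRootedForest

@[elab_as_elim]
lemma induction {motive : V → Prop} (hp : IsRootedForest p)
    (root : ∀ x, p x = x → motive x) (child : ∀ x, p x ≠ x → motive (p x) → motive x) (x : V) :
    motive x := by
  obtain ⟨h, hlt⟩ := hp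
  induction x using (measure h).wf.induction with
  | h x ih =>
    by_cases hx : p x = x
    · exact root x hx
    · exact child x hx (ih (p x) (hlt x hx))

lemma apply_apply_ne (hp : IsRootedForest p) {x : V} (hx : p x ≠ x) : p (p x) ≠ x := by
  obtain ⟨h, hlt⟩ := hp
  intro hpp
  have hback := hlt (p x) (by rw [hpp]; exact hx.symm)
  rw [hpp] at hback
  exact hback.asymm (hlt x hx)

lemma exists_isFixedPt_iterate (hp : IsRootedForest p) (x : V) :
    ∃ k, Function.IsFixedPt p (p^[k] x) := by
  induction x using hp.induction with
  | root x hx => exact ⟨0, hx⟩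
  | child x _ ih =>
    obtain ⟨k, hk⟩ := ih
    exact ⟨k + 1, hk⟩

/-- The root of the tree containing `x`: the fixed point reached by iterating the parent map. -/
noncomputable def root (hp : IsRootedForest p) (x : V) : V :=
  p^[(hp.exists_isFixedPt_iterate x).choose] x

variable (hp : IsRootedForest p)

lemma isFixedPt_root (x : V) : p (hp.root x) = hp.root x :=
  (hp.exists_isFixedPt_iterate x).choose_spec

lemma root_eq_iterate {x : V} {k : ℕ} (hk : Function.IsFixedPt p (p^[k] x)) :
    hp.root x = p^[k] x := by
  set l := (hp.exists_isFixedPt_iterate x).choose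
  have hroot : Function.IsFixedPt p (p^[l] x) := hp.isFixedPt_root x
  calc hp.root x = p^[k] (p^[l] x) := (hroot.iterate k).symm
    _ = p^[l] (p^[k] x) := (Function.Commute.iterate_iterate_self p k l) x
    _ = p^[k] x := hk.iterate l

lemma root_of_apply_eq_self {x : V} (hx : p x = x) : hp.root x = x :=
  hp.root_eq_iterate (k := 0) hx

lemma root_apply (x : V) : hp.root (p x) = hp.root x :=
  (hp.root_eq_iterate (k := (hp.exists_isFixedPt_iterate (p x)).choose + 1)
    (hp.isFixedPt_root (p x))).symm

/-- The heights in the tree of `r` are raised above that of its new parent `v`. -/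
lemma update [DecidableEq V] {r v : V} (hr : p r = r) (hv : hp.root v ≠ r) :
    IsRootedForest (Function.update p r v) := by
  have ⟨h, hlt⟩ := hp
  refine ⟨fun x => if hp.root x = r then h x + h v + 1 else h x, fun x hx => ?_⟩
  obtain rfl | hxr := eq_or_ne x r
  · simp [hv, hp.root_of_apply_eq_self hr]
  · rw [Function.update_of_ne hxr] at hx ⊢
    have := hlt x hx
    simp only [hp.root_apply]
    split_ifs <;> omega

end IsRootedForest

end RootedForest

/-! ### The graph of a parent map -/

section ParentGraph

variable {V : Type*} {p q : V → V}

/-- The graph underlying a rooted forest with parent map `p`: the edges join each `x` that is not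
fixed by `p` to `p x`. -/
def parentGraph (p : V → V) : SimpleGraph V :=
  SimpleGraph.fromRel (fun x y => p x = y)

lemma parentGraph_adj {x y : V} : (parentGraph p).Adj x y ↔ x ≠ y ∧ (p x = y ∨ p y = x) := by
  simp [parentGraph]

lemma parentGraph_adj_apply {x : V} (hx : p x ≠ x) : (parentGraph p).Adj x (p x) :=
  parentGraph_adj.2 ⟨hx.symm, .inl rfl⟩

lemma edgeSet_parentGraph (p : V → V) :
    (parentGraph p).edgeSet = (fun x => s(x, p x)) '' {x | p x ≠ x} := by
  ext e
  induction e with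
  | _ x y =>
    simp only [SimpleGraph.mem_edgeSet, parentGraph_adj, Set.mem_image, Set.mem_ofPred_eq,
      Sym2.eq_iff]
    grind

namespace IsRootedForest

/-- If `p x ≠ q x`, then `q` traverses the edge from `x` to `p x` in the opposite direction, so `p`
and `q` also differ at `p x`, which is closer to the root. -/
lemma eq_of_parentGraph_eq (hp : IsRootedForest p) (hgraph : parentGraph p = parentGraph q)
    (hroots : ∀ x, p x = x ↔ q x = x) : p = q := by
  funext x
  induction x using hp.induction with
  | root x hx => rw [hx, (hroots x).1 hx]
  | child x hx ih =>
    have hadj : (parentGraph q).Adj x (p x) := hgraph ▸ parentGraph_adj_apply hx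
    rcases (parentGraph_adj.1 hadj).2 with hdown | hup
    · exact hdown.symm
    · exact absurd (ih.trans hup) (hp.apply_apply_ne hx)

lemma reachable_root (hp : IsRootedForest p) (x : V) :
    (parentGraph p).Reachable x (hp.root x) := by
  induction x using hp.induction with
  | root x hx => rw [hp.root_of_apply_eq_self hx]
  | child x hx ih => exact (parentGraph_adj_apply hx).reachable.trans (hp.root_apply x ▸ ih)

lemma isTree_parentGraph [Finite V] (hp : IsRootedForest p) {r : V} (hr : ∀ x, p x = x ↔ x = r) :
    (parentGraph p).IsTree := by
  have hreach (x : V) : (parentGraph p).Reachable x r :=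
    (hr _).1 (hp.isFixedPt_root x) ▸ hp.reachable_root x
  have hconn : (parentGraph p).Connected :=
    { preconnected := fun x y => (hreach x).trans (hreach y).symm
      nonempty := ⟨r⟩ }
  have hedges : Nat.card (parentGraph p).edgeSet + 1 ≤ Nat.card V := by
    have hnonroots : {x | p x ≠ x} = {r}ᶜ := by ext x; simp [hr]
    have hcompl := Set.ncard_add_ncard_compl {r}
    have himage := Set.ncard_image_le (f := fun x => s(x, p x)) {x | p x ≠ x}.toFinite
    rw [← edgeSet_parentGraph, hnonroots] at himage
    rw [Set.ncard_singleton] at hcompl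
    rw [Nat.card_coe_set_eq]
    omega
  exact SimpleGraph.isTree_iff_connected_and_card.2
    ⟨hconn, hedges.antisymm hconn.card_vert_le_card_edgeSet_add_one⟩

end IsRootedForest

end ParentGraph

/-! ### The lower bound in Cayley's formula -/

section Cayley

open scoped Classical in
/-- The rooted forests on `V` with exactly `j` edges, that is, `j` non-roots. -/
noncomputable def rootedForests (V : Type*) [Fintype V] (j : ℕ) : Finset (V → V) :=
  {p | IsRootedForest p ∧ Finset.card {x | p x ≠ x} = j}

/-- The rooted forest `q` arises from `p` by hanging a root `r` of `p` below some other vertex. -/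
def IsGraft {V : Type*} (p q : V → V) : Prop :=
  ∃ r, p r = r ∧ q r ≠ r ∧ ∀ x ≠ r, q x = p x

variable {V : Type*} [Fintype V] {j : ℕ} {p q : V → V}

open scoped Classical in
lemma mem_rootedForests :
    p ∈ rootedForests V j ↔ IsRootedForest p ∧ Finset.card {x | p x ≠ x} = j := by
  simp [rootedForests]

open scoped Classical in
lemma card_roots_of_mem_rootedForests (hp : p ∈ rootedForests V j) :
    Finset.card {x | p x = x} = Fintype.card V - j := by
  have hsplit := Finset.card_filter_add_card_filter_not (s := (univ : Finset V)) (fun x => p x = x)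
  rw [(mem_rootedForests.1 hp).2, Finset.card_univ] at hsplit
  omega

lemma update_mem_rootedForests [DecidableEq V] {r v : V} (hp : p ∈ rootedForests V j)
    (hr : p r = r) (hv : (mem_rootedForests.1 hp).1.root v ≠ r) :
    Function.update p r v ∈ rootedForests V (j + 1) := by
  obtain ⟨hforest, hcard⟩ := mem_rootedForests.1 hp
  have hvr : v ≠ r := fun h => hv (by rw [h, hforest.root_of_apply_eq_self hr])
  refine mem_rootedForests.2 ⟨hforest.update hr hv, ?_⟩
  rw [← hcard, ← Finset.card_insert_of_notMem (a := r) (by simpa using hr)]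
  congr 1
  ext x
  obtain rfl | hx := eq_or_ne x r <;> simp [*]

open scoped Classical in
/-- There are `|V|` choices of the new parent `v` and then `|V| - j - 1` choices of a root `r` in
another tree. -/
lemma le_card_grafts (hp : p ∈ rootedForests V j) :
    Fintype.card V * (Fintype.card V - j - 1) ≤
      ((rootedForests V (j + 1)).bipartiteAbove IsGraft p).card := by
  have hforest := (mem_rootedForests.1 hp).1
  let choices : Finset (Σ _ : V, V) :=
    univ.sigma fun v => ({r | p r = r} : Finset V).erase (hforest.root v)
  have hchoices : choices.card = Fintype.card V * (Fintype.card V - j - 1) := by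
    have hcard (v : V) : (({r | p r = r} : Finset V).erase (hforest.root v)).card =
        Fintype.card V - j - 1 := by
      rw [Finset.card_erase_of_mem (by simp [hforest.isFixedPt_root]),
        card_roots_of_mem_rootedForests hp]
    simp [choices, Finset.card_sigma, hcard]
  have hmem {v r : V} : ⟨v, r⟩ ∈ choices ↔ hforest.root v ≠ r ∧ p r = r := by
    simp [choices, eq_comm]
  have hne {v r : V} (h : ⟨v, r⟩ ∈ choices) : v ≠ r := by
    rintro rfl
    exact (hmem.1 h).1 (hforest.root_of_apply_eq_self (hmem.1 h).2)
  rw [← hchoices]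
  refine Finset.card_le_card_of_injOn (fun c => Function.update p c.2 c.1) ?_ ?_
  · rintro ⟨v, r⟩ hc
    obtain ⟨hv, hr⟩ := hmem.1 hc
    refine Finset.mem_coe.2 ((Finset.mem_bipartiteAbove _).2
      ⟨update_mem_rootedForests hp hr hv, r, hr, ?_, fun x hx => ?_⟩)
    · simpa using hne hc
    · simp [hx]
  · rintro ⟨v, r⟩ hc ⟨v', r'⟩ - heq
    have hrr : r = r' := by
      by_contra hrr
      have hat_r := congrFun heq r
      simp only [Function.update_self, Function.update_of_ne hrr, (hmem.1 hc).2] at hat_r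
      exact hne hc hat_r
    subst hrr
    obtain rfl : v = v' := by simpa using congrFun heq r
    rfl

open scoped Classical in
/-- The original forest is recovered by cutting one of the `j` edges of `q`. -/
lemma card_cuttings_le (s : Finset (V → V)) (hq : q ∈ rootedForests V j) :
    (s.bipartiteBelow IsGraft q).card ≤ j := by
  rw [← (mem_rootedForests.1 hq).2]
  refine le_trans (Finset.card_le_card fun p hp => ?_)
    (Finset.card_image_le (f := fun r => Function.update q r r))
  obtain ⟨-, r, hpr, hqr, hoff⟩ := (Finset.mem_bipartiteBelow _).1 hp
  refine Finset.mem_image.2 ⟨r, by simpa using hqr, ?_⟩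
  rw [Function.update_eq_iff]
  exact ⟨hpr.symm, hoff⟩

variable (V)

lemma card_rootedForests_mul_le (j : ℕ) :
    (rootedForests V j).card * (Fintype.card V * (Fintype.card V - j - 1)) ≤
      (rootedForests V (j + 1)).card * (j + 1) := by
  classical
  exact Finset.card_mul_le_card_mul IsGraft (fun _ hp => le_card_grafts hp)
    fun _ hq => card_cuttings_le _ hq

lemma pow_mul_descFactorial_le_card_rootedForests_mul (j : ℕ) :
    Fintype.card V ^ j * (Fintype.card V - 1).descFactorial j ≤
      (rootedForests V j).card * j.factorial := by
  induction j with
  | zero =>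
    have hid : (id : V → V) ∈ rootedForests V 0 := by
      classical
      exact mem_rootedForests.2 ⟨⟨0, fun _ hx => absurd rfl hx⟩, by simp⟩
    simpa using Finset.card_pos.2 ⟨id, hid⟩
  | succ j ih =>
    set n := Fintype.card V
    calc n ^ (j + 1) * (n - 1).descFactorial (j + 1)
        = n ^ j * (n - 1).descFactorial j * (n * (n - j - 1)) := by
          rw [Nat.descFactorial_succ, Nat.sub_right_comm]; ring
      _ ≤ (rootedForests V j).card * j.factorial * (n * (n - j - 1)) := by gcongr
      _ = (rootedForests V j).card * (n * (n - j - 1)) * j.factorial := by ring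
      _ ≤ (rootedForests V (j + 1)).card * (j + 1) * j.factorial := by
          exact Nat.mul_le_mul_right _ (card_rootedForests_mul_le V j)
      _ = (rootedForests V (j + 1)).card * (j + 1).factorial := by
          rw [Nat.factorial_succ]; ring

lemma pow_le_card_rootedForests :
    Fintype.card V ^ (Fintype.card V - 1) ≤ (rootedForests V (Fintype.card V - 1)).card := by
  have hforests := pow_mul_descFactorial_le_card_rootedForests_mul V (Fintype.card V - 1)
  rw [Nat.descFactorial_self] at hforests
  exact Nat.le_of_mul_le_mul_right hforests (Nat.factorial_pos _)

variable {V} in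
lemma exists_forall_eq_iff_of_mem_rootedForests [Nonempty V]
    (hp : p ∈ rootedForests V (Fintype.card V - 1)) : ∃ r, ∀ x, p x = x ↔ x = r := by
  classical
  have hcard : Finset.card {x | p x = x} = 1 := by
    rw [card_roots_of_mem_rootedForests hp, Nat.sub_sub_self Fintype.card_pos]
  obtain ⟨r, hr⟩ := Finset.card_eq_one.1 hcard
  exact ⟨r, fun x => by simpa using Finset.ext_iff.1 hr x⟩

lemma card_rootedForests_le_card_isTree_mul [Nonempty V] :
    (rootedForests V (Fintype.card V - 1)).card ≤
      Nat.card {G : SimpleGraph V // G.IsTree} * Fintype.card V := by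
  choose root hroot using fun p : rootedForests V (Fintype.card V - 1) =>
    exists_forall_eq_iff_of_mem_rootedForests p.2
  have hforest (p : rootedForests V (Fintype.card V - 1)) : IsRootedForest p.1 := by
    classical
    exact (mem_rootedForests.1 p.2).1
  let toRootedTree (p : rootedForests V (Fintype.card V - 1)) :
      {G : SimpleGraph V // G.IsTree} × V :=
    (⟨parentGraph p.1, (hforest p).isTree_parentGraph (hroot p)⟩, root p)
  have hinj : Function.Injective toRootedTree := by
    intro p q hpq
    simp only [toRootedTree, Prod.mk.injEq, Subtype.mk.injEq] at hpq
    exact Subtype.ext ((hforest p).eq_of_parentGraph_eq hpq.1 fun x => by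
      rw [hroot, hroot, hpq.2])
  simpa using Nat.card_le_card_of_injective toRootedTree hinj

lemma pow_card_le_card_isTree_mul_sq [Nonempty V] :
    Fintype.card V ^ Fintype.card V ≤
      Nat.card {G : SimpleGraph V // G.IsTree} * Fintype.card V ^ 2 := by
  set n := Fintype.card V
  calc n ^ n = n ^ (n - 1) * n := (pow_sub_one_mul Fintype.card_ne_zero n).symm
    _ ≤ Nat.card {G : SimpleGraph V // G.IsTree} * n * n := by
        gcongr
        exact (pow_le_card_rootedForests V).trans (card_rootedForests_le_card_isTree_mul V)
    _ = Nat.card {G : SimpleGraph V // G.IsTree} * n ^ 2 := by ring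

end Cayley

/-! ### Counting pairs of a tree and a subtree -/

section Pairs

variable {V : Type*} {G : SimpleGraph V}

lemma snd_mem_of_preconnected_induce (hG : G.IsAcyclic) {S : Set V}
    (hS : (G.induce S).Preconnected) {x r : V} (hx : x ∈ S) (hr : r ∈ S) {w : G.Walk x r}
    (hw : w.IsPath) : w.snd ∈ S := by
  obtain ⟨u, hu⟩ := hS.exists_isPath ⟨x, hx⟩ ⟨r, hr⟩
  let inclusion := (SimpleGraph.Embedding.induce (G := G) S).toHom
  have hmap : (u.map inclusion).IsPath := hu.map Subtype.val_injective
  have heq : w = u.map inclusion :=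
    congrArg Subtype.val ((hG.subsingleton_path x r).elim ⟨w, hw⟩ ⟨_, hmap⟩)
  have hsnd : w.snd = u.getVert 1 :=
    (congrArg SimpleGraph.Walk.snd heq).trans (u.getVert_map inclusion 1)
  exact hsnd ▸ (u.getVert 1).2

/-- If `x` and `y` are adjacent, then either the path from `y` to `r` passes through `x`, or it
extends to the path from `x` to `r`. -/
lemma parentGraph_snd (hG : G.IsAcyclic) {r : V} {w : ∀ x, G.Walk x r}
    (hw : ∀ x, (w x).IsPath) : parentGraph (fun x => (w x).snd) = G := by
  have hadj_snd {x : V} {u : G.Walk x r} (hx : x ≠ u.snd) : G.Adj x u.snd := by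
    cases u with
    | nil => exact absurd rfl hx
    | cons hadj _ => simpa using hadj
  ext x y
  rw [parentGraph_adj]
  constructor
  · rintro ⟨hne, rfl | rfl⟩
    · exact hadj_snd hne
    · exact (hadj_snd hne.symm).symm
  · intro hadj
    refine ⟨hadj.ne, ?_⟩
    by_cases hx : x ∈ (w y).support
    · exact .inr (hG.eq_snd_of_adj_start (hw y) hadj.symm hx).symm
    · have heq : w x = .cons hadj (w y) :=
        congrArg Subtype.val ((hG.subsingleton_path x r).elim ⟨_, hw x⟩ ⟨_, (hw y).cons hx⟩)
      exact .inl (by simp [heq])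

lemma exists_parentGraph_eq_and_mapsTo (hG : G.IsTree) {S : Set V}
    (hS : (G.induce S).Connected) : ∃ f : V → V, parentGraph f = G ∧ Set.MapsTo f S S := by
  obtain ⟨r, hr⟩ := hS.nonempty
  choose w hw using fun x => hG.connected.preconnected.exists_isPath x r
  exact ⟨fun x => (w x).snd, parentGraph_snd hG.isAcyclic hw, fun x hx =>
    snd_mem_of_preconnected_induce hG.isAcyclic hS.preconnected hx hr (hw x)⟩

variable (V)

lemma card_isTree_sigma_connected_le [Finite V] :
    Nat.card (Σ G : {G : SimpleGraph V // G.IsTree}, {S : Set V // (G.1.induce S).Connected}) ≤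
      Nat.card {t : Set V × (V → V) // Set.MapsTo t.2 t.1 t.1} := by
  choose f hgraph hmaps using fun t : Σ G : {G : SimpleGraph V // G.IsTree},
    {S : Set V // (G.1.induce S).Connected} => exists_parentGraph_eq_and_mapsTo t.1.2 t.2.2
  refine Nat.card_le_card_of_injective (fun t => ⟨(t.2.1, f t), hmaps t⟩) fun t u htu => ?_
  simp only [Subtype.mk.injEq, Prod.mk.injEq] at htu
  have hgraphs : t.1.1 = u.1.1 := by rw [← hgraph t, ← hgraph u, htu.2]
  obtain ⟨⟨G, hG⟩, S, hS⟩ := t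
  obtain ⟨⟨G', hG'⟩, S', hS'⟩ := u
  obtain rfl : G = G' := hgraphs
  obtain rfl : S = S' := htu.1
  rfl

variable [Fintype V]

variable {V} in
lemma card_mapsTo (S : Finset V) :
    Nat.card {f : V → V // Set.MapsTo f S S} =
      S.card ^ S.card * Fintype.card V ^ (Fintype.card V - S.card) := by
  classical
  have hpi (f : V → V) :
      Set.MapsTo f S S ↔ f ∈ Fintype.piFinset fun x => if x ∈ S then S else univ := by
    simp only [Fintype.mem_piFinset]
    exact forall_congr' fun x => by split_ifs with hx <;> simp [hx]
  have hcompl : ({x | x ∉ S} : Finset V) = Sᶜ := by ext; simp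
  simp_rw [hpi]
  rw [Nat.card_eq_fintype_card, Fintype.card_coe, Fintype.card_piFinset]
  simp [apply_ite Finset.card, Finset.prod_ite, hcompl, Finset.card_compl]

lemma card_mapsTo_pairs :
    Nat.card {t : Set V × (V → V) // Set.MapsTo t.2 t.1 t.1} =
      ∑ k ∈ Finset.range (Fintype.card V + 1), (Fintype.card V).choose k *
        (k ^ k * Fintype.card V ^ (Fintype.card V - k)) := by
  classical
  rw [Nat.card_congr (Equiv.subtypeProdEquivSigmaSubtype fun (S : Set V) f => Set.MapsTo f S S),
    Nat.card_sigma, ← Fintype.finsetEquivSet.sum_comp]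
  simp only [Fintype.coe_finsetEquivSet, card_mapsTo]
  rw [← Finset.powerset_univ,
    Finset.sum_powerset_apply_card (fun k => k ^ k * Fintype.card V ^ (Fintype.card V - k))]
  simp

end Pairs

/-! ### The expected number of subtrees -/

lemma choose_mul_pow_self_mul_pow_self_le {n k : ℕ} (hk : k ≤ n) :
    n.choose k * (k ^ k * (n - k) ^ (n - k)) ≤ n ^ n := by
  calc n.choose k * (k ^ k * (n - k) ^ (n - k))
      = k ^ k * (n - k) ^ (n - k) * n.choose k := by ring
    _ ≤ ∑ i ∈ Finset.range (n + 1), k ^ i * (n - k) ^ (n - i) * n.choose i :=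
        Finset.single_le_sum (f := fun i => k ^ i * (n - k) ^ (n - i) * n.choose i)
          (fun _ _ => Nat.zero_le _) (Finset.mem_range_succ_iff.2 hk)
    _ = n ^ n := by simpa [hk] using (add_pow k (n - k) n).symm

lemma pow_le_pow_self_mul_exp {x : ℝ} (hx : 0 ≤ x) (m : ℕ) :
    x ^ m ≤ (m : ℝ) ^ m * Real.exp (x * Real.exp (-1)) := by
  obtain rfl | hm := eq_or_ne m 0
  · simpa using by positivity
  have hm' : (m : ℝ) ≠ 0 := Nat.cast_ne_zero.2 hm
  have hexp : x / m ≤ Real.exp (x / m * Real.exp (-1)) := by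
    have h := Real.exp_one_mul_le_exp (x := x / m * Real.exp (-1))
    rwa [mul_left_comm, ← Real.exp_add, add_neg_cancel, Real.exp_zero, mul_one] at h
  calc x ^ m = (m : ℝ) ^ m * (x / m) ^ m := by rw [← mul_pow, mul_div_cancel₀ _ hm']
    _ ≤ (m : ℝ) ^ m * Real.exp (x / m * Real.exp (-1)) ^ m := by gcongr
    _ = (m : ℝ) ^ m * Real.exp (x * Real.exp (-1)) := by
        rw [← Real.exp_nat_mul, ← mul_assoc, mul_div_cancel₀ _ hm']

lemma choose_mul_pow_self_mul_pow_le {n k : ℕ} (hk : k ≤ n) :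
    ((n.choose k * (k ^ k * n ^ (n - k)) : ℕ) : ℝ) ≤
      (n : ℝ) ^ n * Real.exp (Real.exp (-1)) ^ n := by
  have hbinom : ((n.choose k * (k ^ k * (n - k) ^ (n - k)) : ℕ) : ℝ) ≤ (n ^ n : ℕ) :=
    Nat.cast_le.2 (choose_mul_pow_self_mul_pow_self_le hk)
  calc ((n.choose k * (k ^ k * n ^ (n - k)) : ℕ) : ℝ)
      = n.choose k * (k ^ k * (n : ℝ) ^ (n - k)) := by push_cast; rfl
    _ ≤ n.choose k * (k ^ k * (((n - k : ℕ) : ℝ) ^ (n - k) *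
          Real.exp (n * Real.exp (-1)))) := by
        gcongr
        exact pow_le_pow_self_mul_exp n.cast_nonneg _
    _ = (n.choose k * (k ^ k * (n - k) ^ (n - k)) : ℕ) * Real.exp (n * Real.exp (-1)) := by
        push_cast; ring
    _ ≤ (n : ℝ) ^ n * Real.exp (Real.exp (-1)) ^ n := by
        rw [← Real.exp_nat_mul]
        gcongr
        exact_mod_cast hbinom

/-- The expected value of `X` on a uniformly random labelled tree on `n` vertices. -/
noncomputable def treeMean (n : ℕ) (X : SimpleGraph (Fin n) → ℝ) : ℝ :=
  (∑ᶠ G : {G : SimpleGraph (Fin n) // G.IsTree}, X G) /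
    (Nat.card {G : SimpleGraph (Fin n) // G.IsTree} : ℝ)

lemma card_isTree_pos (V : Type*) [Finite V] [Nonempty V] :
    0 < Nat.card {G : SimpleGraph V // G.IsTree} := by
  obtain ⟨T, -, hT⟩ := (SimpleGraph.connected_top (V := V)).exists_isTree_le
  exact Nat.card_pos_iff.2 ⟨⟨T, hT⟩, inferInstance⟩

section TreeProb

variable {n : ℕ}

open scoped Classical in
lemma card_isTree_and (p : SimpleGraph (Fin n) → Prop) :
    Nat.card {G : SimpleGraph (Fin n) // G.IsTree ∧ p G} =
      Finset.card {T : {G : SimpleGraph (Fin n) // G.IsTree} | p T} := by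
  rw [← Nat.card_congr (Equiv.subtypeSubtypeEquivSubtypeInter (fun G => G.IsTree) p),
    Nat.card_eq_fintype_card, Fintype.card_subtype]

lemma treeProb_not [NeZero n] (p : SimpleGraph (Fin n) → Prop) :
    (treeProb n fun G => ¬ p G) = 1 - treeProb n p := by
  classical
  have hpos : (0 : ℝ) < Nat.card {G : SimpleGraph (Fin n) // G.IsTree} :=
    Nat.cast_pos.2 (card_isTree_pos (Fin n))
  rw [eq_sub_iff_add_eq', treeProb, treeProb, ← add_div, div_eq_one_iff_eq hpos.ne',
    ← Nat.cast_add, card_isTree_and, card_isTree_and, Finset.card_filter_add_card_filter_not,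
    Finset.card_univ, Nat.card_eq_fintype_card]

lemma treeProb_nonneg (p : SimpleGraph (Fin n) → Prop) : 0 ≤ treeProb n p := by
  unfold treeProb
  positivity

lemma treeProb_lt_mul_le_treeMean {X : SimpleGraph (Fin n) → ℝ} (hX : ∀ G, 0 ≤ X G) (a : ℝ) :
    treeProb n (fun G => a < X G) * a ≤ treeMean n X := by
  classical
  rw [treeProb, treeMean, div_mul_eq_mul_div, card_isTree_and, finsum_eq_sum_of_fintype]
  let exceeding : Finset {G : SimpleGraph (Fin n) // G.IsTree} := {T | a < X T}
  gcongr
  calc (exceeding.card : ℝ) * a = exceeding.card • a := (nsmul_eq_mul _ _).symm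
    _ ≤ ∑ T ∈ exceeding, X T :=
        exceeding.card_nsmul_le_sum (fun T => X T) a fun T hT =>
          le_of_lt (by simpa [exceeding] using hT)
    _ ≤ ∑ T : {G : SimpleGraph (Fin n) // G.IsTree}, X T :=
        Finset.sum_le_univ_sum_of_nonneg fun T => hX T

lemma finsum_subtreeCount_le (n : ℕ) :
    ∑ᶠ G : {G : SimpleGraph (Fin n) // G.IsTree}, (subtreeCount G.1 : ℝ) ≤
      (n + 1) * ((n : ℝ) ^ n * Real.exp (Real.exp (-1)) ^ n) := by
  classical
  have hpairs := (card_isTree_sigma_connected_le (Fin n)).trans_eq (card_mapsTo_pairs (Fin n))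
  rw [Nat.card_sigma, Fintype.card_fin] at hpairs
  calc ∑ᶠ G : {G : SimpleGraph (Fin n) // G.IsTree}, (subtreeCount G.1 : ℝ)
      = (∑ G : {G : SimpleGraph (Fin n) // G.IsTree}, subtreeCount G.1 : ℕ) := by
        rw [finsum_eq_sum_of_fintype, Nat.cast_sum]
    _ ≤ ∑ k ∈ Finset.range (n + 1), ((n.choose k * (k ^ k * n ^ (n - k)) : ℕ) : ℝ) := by
        exact_mod_cast hpairs
    _ ≤ ∑ _k ∈ Finset.range (n + 1), (n : ℝ) ^ n * Real.exp (Real.exp (-1)) ^ n :=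
        Finset.sum_le_sum fun k hk =>
          choose_mul_pow_self_mul_pow_le (Finset.mem_range_succ_iff.1 hk)
    _ = (n + 1) * ((n : ℝ) ^ n * Real.exp (Real.exp (-1)) ^ n) := by simp

lemma treeMean_subtreeCount_le [NeZero n] :
    treeMean n (fun G => subtreeCount G) ≤
      (n + 1) * (n : ℝ) ^ 2 * Real.exp (Real.exp (-1)) ^ n := by
  have hcayley : (n : ℝ) ^ n ≤ Nat.card {G : SimpleGraph (Fin n) // G.IsTree} * (n : ℝ) ^ 2 := by
    exact_mod_cast Fintype.card_fin n ▸ pow_card_le_card_isTree_mul_sq (Fin n)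
  rw [treeMean, div_le_iff₀ (Nat.cast_pos.2 (card_isTree_pos (Fin n)))]
  calc ∑ᶠ G : {G : SimpleGraph (Fin n) // G.IsTree}, (subtreeCount G.1 : ℝ)
      ≤ (n + 1) * ((n : ℝ) ^ n * Real.exp (Real.exp (-1)) ^ n) := finsum_subtreeCount_le n
    _ ≤ (n + 1) * ((Nat.card {G : SimpleGraph (Fin n) // G.IsTree} * (n : ℝ) ^ 2) *
          Real.exp (Real.exp (-1)) ^ n) := by gcongr
    _ = (n + 1) * (n : ℝ) ^ 2 * Real.exp (Real.exp (-1)) ^ n *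
          Nat.card {G : SimpleGraph (Fin n) // G.IsTree} := by ring

lemma treeProb_lt_subtreeCount_le [NeZero n] {c : ℝ} (hc : 0 < c) :
    treeProb n (fun G => c ^ n < subtreeCount G) ≤
      (n + 1) * (n : ℝ) ^ 2 * (Real.exp (Real.exp (-1)) / c) ^ n := by
  rw [div_pow, ← mul_div_assoc, le_div_iff₀ (by positivity)]
  exact (treeProb_lt_mul_le_treeMean (fun G => Nat.cast_nonneg _) _).trans treeMean_subtreeCount_le

end TreeProb

/-! ### Asymptotically almost surely -/

lemma tendsto_add_one_mul_sq_mul_pow {r : ℝ} (hr : |r| < 1) :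
    Tendsto (fun n : ℕ => ((n : ℝ) + 1) * (n : ℝ) ^ 2 * r ^ n) atTop (𝓝 0) := by
  have h := (tendsto_pow_const_mul_const_pow_of_abs_lt_one 3 hr).add
    (tendsto_pow_const_mul_const_pow_of_abs_lt_one 2 hr)
  rw [add_zero] at h
  exact h.congr fun n => by ring

lemma exp_exp_neg_one_lt : Real.exp (Real.exp (-1)) < 1.89756 := by
  have hexp : Real.exp (-1) < 1 / 2 := Real.exp_neg_one_lt_half
  have hsq : Real.exp (1 / 2) ^ 2 = Real.exp 1 := by
    rw [← Real.exp_nat_mul]; norm_num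
  calc Real.exp (Real.exp (-1)) < Real.exp (1 / 2) := Real.exp_lt_exp.2 hexp
    _ < 1.89756 := by
        refine lt_of_pow_lt_pow_left₀ 2 (by norm_num) ?_
        rw [hsq]
        exact Real.exp_one_lt_d9.trans (by norm_num)

theorem aas_subtree_upper_bound_189756_general {c : ℝ} (hc : Real.exp (Real.exp (-1)) < c) :
    Tendsto (fun n : ℕ => treeProb n (fun G => (subtreeCount G : ℝ) ≤ c ^ n)) atTop (𝓝 1) := by
  have hc_pos : 0 < c := (Real.exp_pos _).trans hc
  have hratio : |Real.exp (Real.exp (-1)) / c| < 1 := by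
    rwa [abs_of_pos (by positivity), div_lt_one hc_pos]
  have hexceed : Tendsto (fun n : ℕ => treeProb n fun G => c ^ n < subtreeCount G)
      atTop (𝓝 0) := by
    refine squeeze_zero' (.of_forall fun n => treeProb_nonneg _) ?_
      (tendsto_add_one_mul_sq_mul_pow hratio)
    filter_upwards [eventually_ne_atTop 0] with n hn
    have : NeZero n := ⟨hn⟩
    exact treeProb_lt_subtreeCount_le hc_pos
  have hcompl := hexceed.const_sub 1
  rw [sub_zero] at hcompl
  refine hcompl.congr' ?_
  filter_upwards [eventually_ne_atTop 0] with n hn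
  have : NeZero n := ⟨hn⟩
  simpa only [not_lt] using
    (treeProb_not fun G : SimpleGraph (Fin n) => c ^ n < subtreeCount G).symm

/-- A.a.s. the number of subtrees of a uniformly random labelled tree on `n` vertices
is at most `1.89756 ^ n`. -/
theorem aas_subtree_upper_bound_189756 :
    Tendsto (fun n : ℕ =>
      treeProb n (fun G => (subtreeCount G : ℝ) ≤ (1.89756 : ℝ) ^ n))
      atTop (𝓝 1) :=
  aas_subtree_upper_bound_189756_general exp_exp_neg_one_lt
end

section
/- The infinite product ∏_{k=2}^{∞} (2^{k−1}+1)^{e^{−k}/(k−1)!} converges, and 2^{e^{−1} − e^{1/e − 2}} · ∏_{k=2}^{∞} (2^{k−1}+1)^{e^{−k}/(k−1)!} > 1.37135. -/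
/-!
Write `log (2^n + 1) = n log 2 + log (1 + 2^(-n))` with `n = k - 1`. The terms `n log 2` sum to
`e^(1/e - 2) log 2`, which cancels against the prefactor, while `2^(1/e)` is the factor missing at
`n = 0`. Hence the quantity to be bounded equals `∏_{n ≥ 0} (1 + 2^(-n)) ^ (e^(-(n+1)) / n!)`. Its
factors exceed `1` and tend to `1` so fast that the first five already give the bound.
-/

/-- The factor `(2^{k-1}+1)^{e^{-k}/(k-1)!}` for `k ≥ 2`, and `1` for `k < 2`. -/
noncomputable def starFactor (k : ℕ) : ℝ :=
  if k < 2 then 1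
  else ((2 : ℝ) ^ (k - 1) + 1) ^ (Real.exp (-(k : ℝ)) / (Nat.factorial (k - 1)))

open scoped Nat

theorem hasSum_natCast_mul_pow_div_factorial {𝔸 : Type*} [NormedDivisionRing 𝔸]
    [NormedAlgebra ℚ 𝔸] [CompleteSpace 𝔸] (x : 𝔸) :
    HasSum (fun n : ℕ ↦ n * (x ^ n / n !)) (x * NormedSpace.exp x) := by
  have := algebraRat.charZero 𝔸
  have cancel (n : ℕ) : ((n + 1 : ℕ) : 𝔸) * (x ^ (n + 1) / (n + 1)!) = x * (x ^ n / n !) := by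
    rw [Nat.factorial_succ, Nat.cast_mul, div_eq_mul_inv, mul_inv_rev, (Nat.cast_commute _ _).eq,
      mul_assoc, mul_assoc, inv_mul_cancel₀ (Nat.cast_ne_zero.2 n.succ_ne_zero), mul_one,
      pow_succ', mul_assoc, div_eq_mul_inv]
  rw [← hasSum_nat_add_iff' 1]
  simpa only [cancel, Finset.sum_range_one, Nat.cast_zero, zero_mul, sub_zero] using
    (NormedSpace.expSeries_div_hasSum_exp x).mul_left x

/-- The exponential generating function of the sequence `log (1 + r ^ n)`, evaluated at `x`. The
logarithm of the star product is expressed through its values at `x = 1 / e`. -/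
noncomputable def logOneAddPowEGF (r x : ℝ) : ℝ :=
  ∑' n : ℕ, x ^ n / n ! * Real.log (1 + r ^ n)

section logOneAddPowEGF

variable {r : ℝ}

theorem log_one_add_pow_nonneg (hr : 0 ≤ r) (n : ℕ) : 0 ≤ Real.log (1 + r ^ n) :=
  Real.log_nonneg (le_add_of_nonneg_right (pow_nonneg hr n))

theorem log_one_add_pow_le (hr : 0 ≤ r) (n : ℕ) : Real.log (1 + r ^ n) ≤ r ^ n := by
  linarith [Real.log_le_sub_one_of_pos (show 0 < 1 + r ^ n by positivity)]

theorem hasSum_logOneAddPowEGF (hr : 0 ≤ r) (x : ℝ) :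
    HasSum (fun n : ℕ ↦ x ^ n / n ! * Real.log (1 + r ^ n)) (logOneAddPowEGF r x) := by
  refine (Summable.of_norm_bounded (Real.summable_pow_div_factorial (|x| * r)) fun n ↦ ?_).hasSum
  calc ‖x ^ n / n ! * Real.log (1 + r ^ n)‖
      = |x| ^ n / n ! * Real.log (1 + r ^ n) := by
        simp [abs_of_nonneg (log_one_add_pow_nonneg hr n)]
    _ ≤ |x| ^ n / n ! * r ^ n := by gcongr; exact log_one_add_pow_le hr n
    _ = (|x| * r) ^ n / n ! := by rw [mul_pow, div_mul_eq_mul_div]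

theorem sum_range_le_logOneAddPowEGF (hr : 0 ≤ r) {x : ℝ} (hx : 0 ≤ x) (N : ℕ) :
    ∑ n ∈ Finset.range N, x ^ n / n ! * Real.log (1 + r ^ n) ≤ logOneAddPowEGF r x :=
  sum_le_hasSum _ (fun n _ ↦ mul_nonneg (by positivity) (log_one_add_pow_nonneg hr n))
    (hasSum_logOneAddPowEGF hr x)

theorem log_one_add_pow_eq_add_inv (hr : 0 < r) (n : ℕ) :
    Real.log (1 + r ^ n) = n * Real.log r + Real.log (1 + r⁻¹ ^ n) := by
  rw [← Real.log_pow, ← Real.log_mul (by positivity) (by positivity), mul_one_add, ← mul_pow,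
    mul_inv_cancel₀ hr.ne', one_pow, add_comm]

theorem logOneAddPowEGF_eq_add_inv (hr : 0 < r) (x : ℝ) :
    logOneAddPowEGF r x = x * Real.exp x * Real.log r + logOneAddPowEGF r⁻¹ x := by
  have linear_part : HasSum (fun n : ℕ ↦ n * (x ^ n / n !) * Real.log r)
      (x * Real.exp x * Real.log r) := by
    rw [Real.exp_eq_exp_ℝ]
    exact (hasSum_natCast_mul_pow_div_factorial x).mul_right _
  refine (hasSum_logOneAddPowEGF hr.le x).unique ?_
  convert linear_part.add (hasSum_logOneAddPowEGF (inv_nonneg.2 hr.le) x) using 2 with n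
  rw [log_one_add_pow_eq_add_inv hr]
  ring

end logOneAddPowEGF

theorem starFactor_pos (k : ℕ) : 0 < starFactor k := by
  unfold starFactor
  split_ifs <;> positivity

theorem log_starFactor_succ (n : ℕ) :
    Real.log (starFactor (n + 1)) = if n = 0 then 0 else
      Real.exp (-1) * (Real.exp (-1) ^ n / n ! * Real.log (1 + 2 ^ n)) := by
  rcases eq_or_ne n 0 with rfl | hn
  · simp [starFactor]
  · have exp_neg_succ : Real.exp (-(n + 1 : ℕ)) = Real.exp (-1) * Real.exp (-1) ^ n := by
      rw [← pow_succ', ← Real.exp_nat_mul, mul_neg_one]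
    rw [starFactor, if_neg (by omega), if_neg hn, Real.log_rpow (by positivity), exp_neg_succ,
      Nat.add_sub_cancel, add_comm _ (1 : ℝ), mul_div_assoc, mul_assoc]

theorem hasSum_log_starFactor :
    HasSum (fun k ↦ Real.log (starFactor k))
      (Real.exp (-1) * (logOneAddPowEGF 2 (Real.exp (-1)) - Real.log 2)) := by
  rw [← hasSum_nat_add_iff' 1]
  have h := (hasSum_logOneAddPowEGF zero_le_two (Real.exp (-1))).mul_left (Real.exp (-1))
  convert hasSum_ite_sub_hasSum h 0 using 1
  · exact funext log_starFactor_succ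
  · norm_num [starFactor, mul_sub]

theorem hasProd_starFactor :
    HasProd starFactor
      (Real.exp (Real.exp (-1) * (logOneAddPowEGF 2 (Real.exp (-1)) - Real.log 2))) :=
  Real.hasProd_of_hasSum_log starFactor_pos hasSum_log_starFactor

theorem two_rpow_mul_tprod_starFactor :
    (2 : ℝ) ^ (Real.exp (-1) - Real.exp ((Real.exp 1)⁻¹ - 2)) * ∏' k : ℕ, starFactor k =
      Real.exp (Real.exp (-1) * logOneAddPowEGF 2⁻¹ (Real.exp (-1))) := by
  have exp_inv_sub_two : Real.exp ((Real.exp 1)⁻¹ - 2) =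
      Real.exp (-1) * (Real.exp (-1) * Real.exp (Real.exp (-1))) := by
    rw [← Real.exp_neg, ← Real.exp_add, ← Real.exp_add]
    ring_nf
  rw [hasProd_starFactor.tprod_eq, Real.rpow_def_of_pos two_pos, ← Real.exp_add,
    logOneAddPowEGF_eq_add_inv two_pos, exp_inv_sub_two]
  ring_nf

theorem exp_neg_one_mul_logOneAddPowEGF_gt_d6 :
    0.315798 < Real.exp (-1) * logOneAddPowEGF 2⁻¹ (Real.exp (-1)) := by
  have log_three_halves : 0.4054651077 ≤ Real.log (3 / 2) := by
    rw [Real.log_div (by norm_num) (by norm_num)]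
    linarith [Real.log_three_gt_d9, Real.log_two_lt_d9]
  have log_five_quarters : 0.2231435507 ≤ Real.log (5 / 4) := by
    rw [show (5 / 4 : ℝ) = 5 / 2 ^ 2 by norm_num, Real.log_div (by norm_num) (by norm_num),
      Real.log_pow]
    push_cast
    linarith [Real.log_five_gt_d9, Real.log_two_lt_d9]
  have log_nine_eighths : 2 / 17 ≤ Real.log (9 / 8) := by
    convert Real.le_log_one_add_of_nonneg (x := 1 / 8) (by norm_num) using 1 <;> norm_num
  have log_seventeen_sixteenths : 2 / 33 ≤ Real.log (17 / 16) := by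
    convert Real.le_log_one_add_of_nonneg (x := 1 / 16) (by norm_num) using 1 <;> norm_num
  have exp_neg_one_ge := Real.exp_neg_one_gt_d9.le
  calc (0.315798 : ℝ)
      < 0.36787944116 * (0.6931471803 + 0.36787944116 * 0.4054651077 +
          0.36787944116 ^ 2 / 2 * 0.2231435507 + 0.36787944116 ^ 3 / 6 * (2 / 17) +
          0.36787944116 ^ 4 / 24 * (2 / 33)) := by norm_num
    _ ≤ Real.exp (-1) * (Real.log 2 + Real.exp (-1) * Real.log (3 / 2) +
          Real.exp (-1) ^ 2 / 2 * Real.log (5 / 4) + Real.exp (-1) ^ 3 / 6 * Real.log (9 / 8) +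
          Real.exp (-1) ^ 4 / 24 * Real.log (17 / 16)) := by
      gcongr
      exact Real.log_two_gt_d9.le
    _ = Real.exp (-1) * ∑ n ∈ Finset.range 5,
          Real.exp (-1) ^ n / n ! * Real.log (1 + 2⁻¹ ^ n) := by
      norm_num [Finset.sum_range_succ, Nat.factorial]
    _ ≤ Real.exp (-1) * logOneAddPowEGF 2⁻¹ (Real.exp (-1)) := by
      gcongr
      exact sum_range_le_logOneAddPowEGF (by norm_num) (Real.exp_pos _).le 5

/-- The infinite product `∏_{k≥2} (2^{k-1}+1)^{e^{-k}/(k-1)!}` converges, and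
`2^{e^{-1} - e^{1/e - 2}} ∏_{k≥2} (2^{k-1}+1)^{e^{-k}/(k-1)!} > 1.37135`. -/
theorem star_product_lower_bound :
    Multipliable starFactor ∧
    (1.37135 : ℝ) <
      (2 : ℝ) ^ (Real.exp (-1) - Real.exp ((Real.exp 1)⁻¹ - 2)) * ∏' k : ℕ, starFactor k := by
  refine ⟨hasProd_starFactor.multipliable, ?_⟩
  rw [two_rpow_mul_tprod_starFactor]
  calc (1.37135 : ℝ)
      < ∑ i ∈ Finset.range 7, 0.315798 ^ i / (i ! : ℝ) := by
        norm_num [Finset.sum_range_succ, Nat.factorial]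
    _ ≤ Real.exp 0.315798 := Real.sum_le_exp_of_nonneg (by norm_num) 7
    _ < Real.exp (Real.exp (-1) * logOneAddPowEGF 2⁻¹ (Real.exp (-1))) :=
        Real.exp_lt_exp.2 exp_neg_one_mul_logOneAddPowEGF_gt_d6
end
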